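/- Let d ≥ 1, T > 0, and let β and b satisfy hypotheses (i)–(ii). Let u0 ∈ L¹(ℝ^d) ∩ L^∞(ℝ^d). If u₁ and u₂ are both distributional solutions of the nonlinear Fokker–Planck equation ∂_t u − Δβ(u) + div(b(x,u)u) = 0 with initial datum u0, and both satisfy u_i ∈ L^∞((0,T); L¹(ℝ^d)) and u_i ∈ L^∞((0,T)×ℝ^d), then u₁(t,x) = u₂(t,x) for every t ∈ [0,T] and a.e. x ∈ ℝ^d. -/

import Mathlib

open MeasureTheory Filter Set

noncomputable section

/-- The Laplacian of a function on `ℝ^d` (sum of second partial derivatives). -/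
noncomputable def lap {d : ℕ} (f : EuclideanSpace ℝ (Fin d) → ℝ)
    (x : EuclideanSpace ℝ (Fin d)) : ℝ :=
  ∑ i, fderiv ℝ (fun y => fderiv ℝ f y (EuclideanSpace.single i 1)) x
    (EuclideanSpace.single i 1)

/-- Hypothesis (i): `β(0) = 0`, `β ∈ C¹(ℝ)`, and strong monotonicity with constant `γ0 > 0`. -/
def HypBeta (β : ℝ → ℝ) (γ0 : ℝ) : Prop :=
  β 0 = 0 ∧ ContDiff ℝ 1 β ∧ 0 < γ0 ∧
    ∀ r1 r2 : ℝ, γ0 * (r1 - r2) ^ 2 ≤ (β r1 - β r2) * (r1 - r2)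

/-- Hypothesis (ii) on the drift `b : ℝ^d × ℝ → ℝ^d`: `b` is `C¹`, bounded, `b(x,0) = 0`,
`∂_r b` is bounded on `ℝ^d × [-M,M]` for every `M > 0`, and
`δ(r) = sup_x |∇_x b(x,r)|` is a bounded continuous function of `r`. -/
def HypB {d : ℕ} (b : EuclideanSpace ℝ (Fin d) → ℝ → EuclideanSpace ℝ (Fin d)) : Prop :=
  ContDiff ℝ 1 (fun p : EuclideanSpace ℝ (Fin d) × ℝ => b p.1 p.2) ∧
  (∃ C, ∀ x r, ‖b x r‖ ≤ C) ∧
  (∀ x, b x 0 = 0) ∧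
  (∀ M > (0 : ℝ), ∃ C, ∀ x r, |r| ≤ M → ‖deriv (fun s => b x s) r‖ ≤ C) ∧
  (∃ δb : ℝ → ℝ, Continuous δb ∧ (∃ C, ∀ r, δb r ≤ C) ∧
    ∀ r, IsLUB (range fun x => ‖fderiv ℝ (fun y => b y r) x‖) (δb r))

/-- `u` is a distributional (Schwartz sense) solution of
`∂_t u − Δβ(u) + div(b(x,u)u) = 0`, `u(0) = u0`:
each `u(t)` is in `L¹`, `t ↦ u(t,x)dx` is narrowly continuous, the weak formulation holds
against all test functions `φ ∈ C_c^∞((0,∞) × ℝ^d)`, and the initial condition holds a.e. -/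
def IsDistSol {d : ℕ} (β : ℝ → ℝ) (b : EuclideanSpace ℝ (Fin d) → ℝ → EuclideanSpace ℝ (Fin d))
    (u0 : EuclideanSpace ℝ (Fin d) → ℝ) (u : ℝ → EuclideanSpace ℝ (Fin d) → ℝ) : Prop :=
  (∀ t, 0 ≤ t → Integrable (u t)) ∧
  (∀ ψ : EuclideanSpace ℝ (Fin d) → ℝ, Continuous ψ → (∃ C, ∀ x, |ψ x| ≤ C) →
    ∀ s, 0 ≤ s →
      Tendsto (fun t => ∫ x, u t x * ψ x) (nhdsWithin s (Ici 0))
        (nhds (∫ x, u s x * ψ x))) ∧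
  (∀ φ : ℝ → EuclideanSpace ℝ (Fin d) → ℝ,
    ContDiff ℝ (⊤ : ℕ∞) (Function.uncurry φ) →
    HasCompactSupport (Function.uncurry φ) →
    (∀ p ∈ tsupport (Function.uncurry φ), 0 < p.1) →
    (∫ t in Ioi (0 : ℝ), ∫ x,
      (u t x * deriv (fun s => φ s x) t
        + β (u t x) * lap (φ t) x
        + u t x * fderiv ℝ (φ t) x (b x (u t x)))) = 0) ∧
  (∀ᵐ x, u 0 x = u0 x)

/-- `u ∈ L^∞((0,T); L¹(ℝ^d))`. -/
def BddL1 {d : ℕ} (T : ℝ) (u : ℝ → EuclideanSpace ℝ (Fin d) → ℝ) : Prop :=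
  ∃ C, ∀ t ∈ Ioo 0 T, (∫ x, |u t x|) ≤ C

/-- `u ∈ L^∞((0,T) × ℝ^d)`. -/
def BddLinfty {d : ℕ} (T : ℝ) (u : ℝ → EuclideanSpace ℝ (Fin d) → ℝ) : Prop :=
  ∃ C, ∀ᵐ p ∂((volume.restrict (Ioo 0 T)).prod
      (volume : Measure (EuclideanSpace ℝ (Fin d)))), |u p.1 p.2| ≤ C

open scoped FourierTransform RealInnerProductSpace ContDiff

lemma fourier_toLp_ae {d : ℕ} (f : EuclideanSpace ℝ (Fin d) → ℂ) (h1 : Integrable f)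
    (h2 : MemLp f 2) :
    ((𝓕 (h2.toLp f) : Lp (α := EuclideanSpace ℝ (Fin d)) ℂ 2) : EuclideanSpace ℝ (Fin d) → ℂ)
      =ᵐ[volume] 𝓕 f := by
  have hcont : Continuous (𝓕 f) := by
    exact VectorFourier.fourierIntegral_continuous Real.continuous_fourierChar continuous_inner h1
  apply ae_eq_of_integral_contDiff_smul_eq
  · exact (Lp.memLp _).locallyIntegrable (by norm_num)
  · exact hcont.locallyIntegrable
  intro g hg hgc
  have hg₁ : HasCompactSupport (Complex.ofRealCLM ∘ g) := hgc.comp_left rfl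
  have hg₂ : ContDiff ℝ ∞ (Complex.ofRealCLM ∘ g) := by fun_prop
  set G := hg₁.toSchwartzMap hg₂ with hG
  have e1 := congrArg (fun D => D G) (Lp.fourier_toTemperedDistribution_eq (h2.toLp f))
  simp only [TemperedDistribution.fourier_apply, Lp.toTemperedDistribution_apply] at e1
  have e2 : ∀ x, G x = (g x : ℂ) := fun x => rfl
  simp only [e2] at e1
  simp only [Complex.real_smul]
  simp only [smul_eq_mul] at e1
  rw [← e1]
  have e3 : ∫ ξ, (𝓕 f ξ) • (G ξ) = ∫ x, (f x) • (𝓕 (G : EuclideanSpace ℝ (Fin d) → ℂ) x) := by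
    have := VectorFourier.integral_fourierIntegral_smul_eq_flip (μ := volume) (ν := volume)
      (L := innerₗ (EuclideanSpace ℝ (Fin d))) (f := f) (g := G) Real.continuous_fourierChar continuous_inner h1 (G.integrable)
    rw [flip_innerₗ] at this
    exact this
  simp only [e2, smul_eq_mul] at e3
  simp only [mul_comm (Complex.ofReal _)]
  rw [e3]
  apply integral_congr_ae
  filter_upwards [h2.coeFn_toLp] with x hx
  rw [hx, SchwartzMap.fourier_coe, mul_comm]

/-- cosine transform with phase. -/
noncomputable def FT {d : ℕ} (a : ℝ) (f : EuclideanSpace ℝ (Fin d) → ℝ)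
    (ξ : EuclideanSpace ℝ (Fin d)) : ℝ := ∫ x, f x * Real.cos (2 * Real.pi * ⟪x, ξ⟫ + a)

lemma int_cos {d : ℕ} (a : ℝ) (f : EuclideanSpace ℝ (Fin d) → ℝ)
    (ξ : EuclideanSpace ℝ (Fin d)) (hf : Integrable f) :
    Integrable (fun x => f x * Real.cos (2 * Real.pi * ⟪x, ξ⟫ + a)) := by
  refine hf.mul_bdd (c := 1) ?_ ?_
  · exact (by fun_prop : Continuous _).aestronglyMeasurable
  · exact Eventually.of_forall fun x => by simpa using Real.abs_cos_le_one _

lemma FT_phase {d : ℕ} (a : ℝ) (f : EuclideanSpace ℝ (Fin d) → ℝ)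
    (ξ : EuclideanSpace ℝ (Fin d)) (hf : Integrable f) :
    FT a f ξ = Real.cos a * FT 0 f ξ + Real.sin a * FT (Real.pi / 2) f ξ := by
  unfold FT
  rw [← integral_const_mul, ← integral_const_mul, ← integral_add]
  · congr 1; ext x
    rw [Real.cos_add_pi_div_two, Real.cos_add, add_zero]; ring
  · exact (int_cos _ _ _ hf).const_mul _
  · exact (int_cos _ _ _ hf).const_mul _

lemma fourier_ofReal {d : ℕ} (f : EuclideanSpace ℝ (Fin d) → ℝ)
    (ξ : EuclideanSpace ℝ (Fin d)) (hf : Integrable f) :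
    𝓕 (fun x => (f x : ℂ)) ξ = FT 0 f ξ + FT (Real.pi / 2) f ξ * Complex.I := by
  rw [Real.fourier_eq]
  unfold FT
  rw [← integral_complex_ofReal, ← integral_complex_ofReal, ← integral_mul_const, ← integral_add]
  · congr 1; ext x
    rw [Circle.smul_def, Real.fourierChar_apply, smul_eq_mul, Real.cos_add_pi_div_two,
      Complex.exp_mul_I]
    push_cast
    simp only [mul_neg, Complex.cos_neg, Complex.sin_neg, add_zero]
    ring
  · exact (int_cos _ _ _ hf).ofReal
  · exact (int_cos _ _ _ hf).ofReal.mul_const _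

lemma plancherel {d : ℕ} (f g : EuclideanSpace ℝ (Fin d) → ℝ) (hf : Integrable f)
    (hf2 : MemLp f 2) (hg : Integrable g) (hg2 : MemLp g 2) :
    ∫ ξ, (FT 0 f ξ * FT 0 g ξ + FT (Real.pi / 2) f ξ * FT (Real.pi / 2) g ξ) = ∫ x, f x * g x := by
  have kf := fourier_toLp_ae _ hf.ofReal hf2.ofReal
  have kg := fourier_toLp_ae _ hg.ofReal hg2.ofReal
  have e := Lp.inner_fourier_eq (hf2.ofReal (K := ℂ)).toLp (hg2.ofReal (K := ℂ)).toLp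
  rw [L2.inner_def, L2.inner_def] at e
  have e' := congrArg Complex.re e
  have i1 := L2.integrable_inner (𝕜 := ℂ) (𝓕 (hf2.ofReal (K := ℂ)).toLp) (𝓕 (hg2.ofReal (K := ℂ)).toLp)
  have i2 := L2.integrable_inner (𝕜 := ℂ) ((hf2.ofReal (K := ℂ)).toLp) ((hg2.ofReal (K := ℂ)).toLp)
  have r1 := integral_re i1
  have r2 := integral_re i2
  simp only [RCLike.re_eq_complex_re] at r1 r2
  rw [← r1, ← r2] at e'
  convert e' using 1
  · apply integral_congr_ae
    filter_upwards [kf, kg] with ξ h1 h2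
    rw [h1, h2]
    have h3 := fourier_ofReal f ξ hf
    have h4 := fourier_ofReal g ξ hg
    erw [h3, h4]
    simp; ring
  · apply integral_congr_ae
    filter_upwards [(hf2.ofReal (K := ℂ)).coeFn_toLp, (hg2.ofReal (K := ℂ)).coeFn_toLp] with x h1 h2
    rw [h1, h2]
    simp; ring

lemma FT_memLp_aux {d : ℕ} (f : EuclideanSpace ℝ (Fin d) → ℝ) (hf : Integrable f)
    (hf2 : MemLp f 2) : MemLp (FT 0 f) 2 ∧ MemLp (FT (Real.pi / 2) f) 2 := by
  have kf := fourier_toLp_ae _ hf.ofReal hf2.ofReal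
  have m := (Lp.memLp (𝓕 (hf2.ofReal (K := ℂ)).toLp)).ae_eq kf
  have h3 := fun ξ => fourier_ofReal f ξ hf
  constructor
  · refine m.re.ae_eq (Eventually.of_forall fun ξ => ?_)
    erw [h3]; simp
  · refine m.im.ae_eq (Eventually.of_forall fun ξ => ?_)
    erw [h3]; simp

lemma FT_memLp {d : ℕ} (a : ℝ) (f : EuclideanSpace ℝ (Fin d) → ℝ) (hf : Integrable f)
    (hf2 : MemLp f 2) : MemLp (FT a f) 2 := by
  have h := FT_memLp_aux f hf hf2
  have := (h.1.const_mul (Real.cos a)).add (h.2.const_mul (Real.sin a))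
  refine this.ae_eq (Eventually.of_forall fun ξ => ?_)
  simp [FT_phase a f ξ hf]

lemma FT_sq_le {d : ℕ} (a : ℝ) (f : EuclideanSpace ℝ (Fin d) → ℝ) (hf : Integrable f)
    (hf2 : MemLp f 2) : ∫ ξ, (FT a f ξ)^2 ≤ ∫ x, (f x)^2 := by
  have h := FT_memLp_aux f hf hf2
  have := plancherel f f hf hf2 hf hf2
  simp only [← pow_two] at this
  rw [← this]
  apply integral_mono
  · exact (FT_memLp a f hf hf2).integrable_sq
  · exact h.1.integrable_sq.add h.2.integrable_sq
  intro ξ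
  simp only
  rw [FT_phase a f ξ hf]
  have := Real.sin_sq_add_cos_sq a
  nlinarith [sq_nonneg (Real.sin a * FT 0 f ξ - Real.cos a * FT (Real.pi/2) f ξ)]

lemma time_prim (T : ℝ) (hT : 0 < T) (k : ℝ → ℝ) (hk : ContDiff ℝ ∞ k)
    (hkc : HasCompactSupport k) (hks : tsupport k ⊆ Ioo 0 T) (hk0 : ∫ t, k t = 0) :
    ∃ θ : ℝ → ℝ, ContDiff ℝ ∞ θ ∧ HasCompactSupport θ ∧ tsupport θ ⊆ Ioo 0 T ∧ deriv θ = k := by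
  obtain ⟨a, b, ha, hb, hab⟩ : ∃ a b, 0 < a ∧ b < T ∧ tsupport k ⊆ Icc a b := by
    rcases (tsupport k).eq_empty_or_nonempty with h | h
    · exact ⟨1, T - 1, by norm_num, by linarith, by simp [h]⟩
    · have hc : IsCompact (tsupport k) := hkc
      exact ⟨sInf (tsupport k), sSup (tsupport k), (hks (hc.sInf_mem h)).1, (hks (hc.sSup_mem h)).2,
        fun x hx => ⟨csInf_le hc.bddBelow hx, le_csSup hc.bddAbove hx⟩⟩
  have hkcont := hk.continuous
  have hint : Integrable k := hkcont.integrable_of_hasCompactSupport hkc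
  have hz : ∀ x, x ∉ Icc a b → k x = 0 := fun x hx => by
    by_contra h
    exact hx (hab (subset_tsupport k h))
  let θ : ℝ → ℝ := fun t => ∫ s in (0:ℝ)..t, k s
  have hd : ∀ t, HasDerivAt θ (k t) t := fun t => hkcont.integral_hasStrictDerivAt 0 t |>.hasDerivAt
  have hde : deriv θ = k := funext fun t => (hd t).deriv
  have hsupp : ∀ t, t ∉ Icc a b → θ t = 0 := by
    intro t ht
    have ht' : t < a ∨ b < t := by
      simp only [mem_Icc, not_and_or, not_le] at ht; exact ht
    rcases ht' with h | h
    · apply intervalIntegral.integral_zero_ae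
      refine Eventually.of_forall fun s hs => hz s fun hs' => ?_
      rcases le_total 0 t with h0 | h0
      · rw [uIoc_of_le h0] at hs; linarith [hs.2, hs'.1]
      · rw [uIoc_of_ge h0] at hs; linarith [hs.2, hs'.1]
    · by_cases hab' : a ≤ b
      · have h0t : (0:ℝ) ≤ t := by linarith
        show ∫ s in (0:ℝ)..t, k s = 0
        rw [intervalIntegral.integral_of_le h0t, ← hk0]
        apply setIntegral_eq_integral_of_forall_compl_eq_zero
        intro x hx
        apply hz
        intro hx'
        exact hx ⟨by linarith [hx'.1], by linarith [hx'.2]⟩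
      · apply intervalIntegral.integral_zero_ae
        refine Eventually.of_forall fun s hs => hz s fun hs' => ?_
        exact hab' (hs'.1.trans hs'.2)
  have hts : tsupport θ ⊆ Icc a b := by
    apply closure_minimal _ isClosed_Icc
    intro t ht
    by_contra h
    exact ht (hsupp t h)
  refine ⟨θ, ?_, ?_, ?_, hde⟩
  · rw [contDiff_infty_iff_deriv]
    exact ⟨fun t => (hd t).differentiableAt, hde ▸ hk⟩
  · exact isCompact_Icc.of_isClosed_subset (isClosed_tsupport _) hts
  · exact fun t ht => ⟨by linarith [(hts ht).1], by linarith [(hts ht).2]⟩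

lemma time_lemma (T : ℝ) (hT : 0 < T) (f h : ℝ → ℝ) (hf : Continuous f)
    (hh : IntervalIntegrable h volume 0 T)
    (H : ∀ θ : ℝ → ℝ, ContDiff ℝ ∞ θ → HasCompactSupport θ → tsupport θ ⊆ Ioo 0 T →
      ∫ t in Ioo 0 T, (deriv θ t * f t + θ t * h t) = 0) :
    ∀ t ∈ Icc 0 T, f t = f 0 + ∫ s in (0:ℝ)..t, h s := by
  let G : ℝ → ℝ := fun t => ∫ s in (0:ℝ)..t, h s
  have hGac : AbsolutelyContinuousOnInterval G 0 T :=
    hh.absolutelyContinuousOnInterval_intervalIntegral (by simp)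
  have hGc : ContinuousOn G (Icc 0 T) := by
    have := hGac.continuousOn
    rwa [uIcc_of_le hT.le] at this
  have hFc : ContinuousOn (fun t => f t - G t) (Icc 0 T) := hf.continuousOn.sub hGc
  have hFi : IntegrableOn (fun t => f t - G t) (Ioo 0 T) :=
    (hFc.integrableOn_Icc).mono_set Ioo_subset_Icc_self
  have step1 : ∀ θ : ℝ → ℝ, ContDiff ℝ ∞ θ → HasCompactSupport θ → tsupport θ ⊆ Ioo 0 T →
      ∫ t in Ioo 0 T, deriv θ t * (f t - G t) = 0 := by
    intro θ hθ hθc hθs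
    have hθac : AbsolutelyContinuousOnInterval θ 0 T :=
      ContDiffOn.absolutelyContinuousOnInterval ((hθ.of_le (by simp)).contDiffOn)
    have e := hθac.integral_deriv_mul_eq_sub hGac
    have hθT : θ T = 0 := by
      by_contra h'
      exact lt_irrefl _ (hθs (subset_tsupport θ h')).2
    have hG0 : G 0 = 0 := by simp [G]
    rw [hθT, hG0] at e
    simp only [zero_mul, mul_zero, sub_zero] at e
    have e2 : ∫ t in (0:ℝ)..T, (deriv θ t * G t + θ t * h t) = 0 := by
      refine Eq.trans ?_ e
      apply intervalIntegral.integral_congr_ae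
      filter_upwards [hh.ae_hasDerivAt_integral] with x hx hx'
      have := (hx (uIoc_subset_uIcc hx') 0 (by simp)).deriv
      rw [this]
    have e1 := H θ hθ hθc hθs
    rw [← integral_Ioc_eq_integral_Ioo, ← intervalIntegral.integral_of_le hT.le] at e1 ⊢
    have hdc : Continuous (deriv θ) := hθ.continuous_deriv (by simp)
    have hθcont := hθ.continuous
    have i1 : IntervalIntegrable (fun t => deriv θ t * f t) volume 0 T :=
      (hdc.mul hf).intervalIntegrable _ _
    have i2 : IntervalIntegrable (fun t => θ t * h t) volume 0 T :=
      hh.continuousOn_mul hθcont.continuousOn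
    have i3 : IntervalIntegrable (fun t => deriv θ t * G t) volume 0 T := by
      apply ContinuousOn.intervalIntegrable
      rw [uIcc_of_le hT.le]
      exact hdc.continuousOn.mul hGc
    simp only [mul_sub]
    rw [intervalIntegral.integral_sub i1 i3]
    rw [intervalIntegral.integral_add i1 i2] at e1
    rw [intervalIntegral.integral_add i3 i2] at e2
    linarith
  -- normalised bump
  let φ : ContDiffBump (T/2) := ⟨T/8, T/4, by positivity, by linarith⟩
  let ρ := φ.normed volume
  have hρ : ContDiff ℝ ∞ ρ := φ.contDiff_normed
  have hρc : HasCompactSupport ρ := φ.hasCompactSupport_normed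
  have hρs : tsupport ρ ⊆ Ioo 0 T := by
    rw [φ.tsupport_normed_eq, Real.closedBall_eq_Icc]
    intro x hx
    simp only [φ, mem_Icc] at hx
    exact ⟨by linarith [hx.1], by linarith [hx.2]⟩
  have hρ1 : ∫ t, ρ t = 1 := φ.integral_normed
  set c := ∫ t in Ioo 0 T, ρ t * (f t - G t) with hc
  have key : ∀ᵐ t, t ∈ Ioo 0 T → (f t - G t) - c = 0 := by
    apply isOpen_Ioo.ae_eq_zero_of_integral_contDiff_smul_eq_zero
    · exact (hFi.sub (integrableOn_const (by simp))).locallyIntegrableOn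
    intro g hg hgc hgs
    have hρi : Integrable ρ := hρ.continuous.integrable_of_hasCompactSupport hρc
    have hgi : Integrable g := hg.continuous.integrable_of_hasCompactSupport hgc
    obtain ⟨θ, h1, h2, h3, h4⟩ := time_prim T hT (fun t => g t - (∫ s, g s) * ρ t)
      (hg.sub (contDiff_const.mul hρ)) (hgc.sub (hρc.mul_left))
      ((tsupport_sub _ _).trans (union_subset hgs ((tsupport_mul_subset_right).trans hρs)))
      (by rw [integral_sub hgi (hρi.const_mul _), integral_const_mul, hρ1]; ring)
    have e := step1 θ h1 h2 h3
    rw [h4] at e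
    have hbg : ∃ C, ∀ x, ‖g x‖ ≤ C := hgc.exists_bound_of_continuous hg.continuous
    have hbρ : ∃ C, ∀ x, ‖ρ x‖ ≤ C := hρc.exists_bound_of_continuous hρ.continuous
    obtain ⟨C1, hC1⟩ := hbg
    obtain ⟨C2, hC2⟩ := hbρ
    have i1 : Integrable (fun t => g t * (f t - G t)) (volume.restrict (Ioo 0 T)) :=
      Integrable.bdd_mul hFi hg.continuous.aestronglyMeasurable (Eventually.of_forall hC1)
    have i2 : Integrable (fun t => ρ t * (f t - G t)) (volume.restrict (Ioo 0 T)) :=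
      Integrable.bdd_mul hFi hρ.continuous.aestronglyMeasurable (Eventually.of_forall hC2)
    simp only [sub_mul, mul_assoc] at e
    rw [integral_sub i1 (i2.const_mul _), integral_const_mul, ← hc] at e
    have e3 : ∫ x, g x • (f x - G x - c) = ∫ t in Ioo 0 T, g t * (f t - G t - c) := by
      symm
      apply setIntegral_eq_integral_of_forall_compl_eq_zero
      intro x hx
      have : g x = 0 := by
        by_contra h'
        exact hx (hgs (subset_tsupport g h'))
      simp [this]
    have e4 : ∫ t in Ioo 0 T, g t = ∫ t, g t := by
      apply setIntegral_eq_integral_of_forall_compl_eq_zero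
      intro x hx
      by_contra h'
      exact hx (hgs (subset_tsupport g h'))
    rw [e3]
    simp only [mul_sub _ _ c]
    rw [integral_sub i1 (hgi.integrableOn.mul_const _), integral_mul_const, e4]
    linarith
  have key2 : EqOn (fun t => f t - G t) (fun _ => c) (Icc 0 T) := by
    have h1 : EqOn (fun t => f t - G t) (fun _ => c) (Ioo 0 T) := by
      apply Measure.eqOn_open_of_ae_eq (μ := volume) _ isOpen_Ioo (hFc.mono Ioo_subset_Icc_self)
        continuousOn_const
      rw [EventuallyEq, ae_restrict_iff' measurableSet_Ioo]
      filter_upwards [key] with t ht ht'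
      linarith [ht ht']
    have h2 := h1.of_subset_closure hFc continuousOn_const Ioo_subset_Icc_self
      (by rw [closure_Ioo hT.ne])
    exact h2
  intro t ht
  have h1 := key2 ht
  have h2 := key2 (left_mem_Icc.2 hT.le)
  have h3 : G 0 = 0 := by simp [G]
  simp only [h3] at h1 h2
  show f t = f 0 + G t
  linarith
lemma contDiff_fderiv_apply' {d : ℕ} {f : EuclideanSpace ℝ (Fin d) → ℝ} (hf : ContDiff ℝ ∞ f)
    (v : EuclideanSpace ℝ (Fin d)) : ContDiff ℝ ∞ (fun y => fderiv ℝ f y v) := by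
  exact (hf.fderiv_right (m := ∞) (by simp)).clm_apply contDiff_const

lemma lap_cont {d : ℕ} {f : EuclideanSpace ℝ (Fin d) → ℝ} (hf : ContDiff ℝ ∞ f) :
    Continuous (lap f) := by
  unfold lap
  refine continuous_finsetSum _ fun i _ => ?_
  exact (contDiff_fderiv_apply' (contDiff_fderiv_apply' hf _) _).continuous

lemma lap_congr {d : ℕ} {f g : EuclideanSpace ℝ (Fin d) → ℝ} {x : EuclideanSpace ℝ (Fin d)}
    (h : f =ᶠ[nhds x] g) : lap f x = lap g x := by
  unfold lap
  refine Finset.sum_congr rfl fun i _ => ?_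
  have : (fun y => fderiv ℝ f y (EuclideanSpace.single i 1)) =ᶠ[nhds x]
      (fun y => fderiv ℝ g y (EuclideanSpace.single i 1)) := by
    filter_upwards [h.fderiv (𝕜 := ℝ)] with y hy
    rw [hy]
  rw [this.fderiv_eq]

lemma lap_mul {d : ℕ} {f g : EuclideanSpace ℝ (Fin d) → ℝ} (hf : ContDiff ℝ ∞ f)
    (hg : ContDiff ℝ ∞ g) (x : EuclideanSpace ℝ (Fin d)) :
    lap (fun y => f y * g y) x = f x * lap g x + g x * lap f x
      + 2 * ∑ i, fderiv ℝ f x (EuclideanSpace.single i 1) * fderiv ℝ g x (EuclideanSpace.single i 1) := by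
  unfold lap
  rw [Finset.mul_sum, Finset.mul_sum, Finset.mul_sum, ← Finset.sum_add_distrib,
    ← Finset.sum_add_distrib]
  refine Finset.sum_congr rfl fun i _ => ?_
  have df := hf.differentiable (by simp)
  have dg := hg.differentiable (by simp)
  have df' := (contDiff_fderiv_apply' hf (EuclideanSpace.single i 1)).differentiable (by simp)
  have dg' := (contDiff_fderiv_apply' hg (EuclideanSpace.single i 1)).differentiable (by simp)
  have e : (fun y => fderiv ℝ (fun y => f y * g y) y (EuclideanSpace.single i 1)) =
      fun y => f y * fderiv ℝ g y (EuclideanSpace.single i 1) + g y * fderiv ℝ f y (EuclideanSpace.single i 1) := by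
    ext y
    rw [fderiv_fun_mul (df y) (dg y)]
    simp
  rw [e, fderiv_fun_add ((df.fun_mul dg') x) ((dg.fun_mul df') x), fderiv_fun_mul (df x) (dg' x),
    fderiv_fun_mul (dg x) (df' x)]
  simp
  ring

lemma lap_const_mul {d : ℕ} {f : EuclideanSpace ℝ (Fin d) → ℝ} (hf : ContDiff ℝ ∞ f) (c : ℝ)
    (x : EuclideanSpace ℝ (Fin d)) : lap (fun y => c * f y) x = c * lap f x := by
  rw [lap_mul contDiff_const hf]
  simp [lap]

lemma fderiv_scale {d : ℕ} {f : EuclideanSpace ℝ (Fin d) → ℝ} (hf : ContDiff ℝ ∞ f) (c : ℝ)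
    (x v : EuclideanSpace ℝ (Fin d)) :
    fderiv ℝ (fun y => f (c • y)) x v = c * fderiv ℝ f (c • x) v := by
  rw [fderiv_comp_smul]; simp

lemma lap_scale {d : ℕ} {f : EuclideanSpace ℝ (Fin d) → ℝ} (hf : ContDiff ℝ ∞ f) (c : ℝ)
    (x : EuclideanSpace ℝ (Fin d)) :
    lap (fun y => f (c • y)) x = c ^ 2 * lap f (c • x) := by
  unfold lap
  rw [Finset.mul_sum]
  refine Finset.sum_congr rfl fun i _ => ?_
  simp only [fderiv_scale hf]
  have h := contDiff_fderiv_apply' hf (EuclideanSpace.single i 1)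
  rw [fderiv_const_mul, _root_.smul_apply, fderiv_scale h]
  · simp; ring
  · exact (h.comp (contDiff_const_smul c)).differentiable (by simp) x

/-- smooth with bounded derivatives -/
def Nice {d : ℕ} (C : ℝ) (η : EuclideanSpace ℝ (Fin d) → ℝ) : Prop :=
  ContDiff ℝ ∞ η ∧ (∀ x, |η x| ≤ C) ∧ (∀ x, ‖fderiv ℝ η x‖ ≤ C) ∧ ∀ x, |lap η x| ≤ C

lemma nice_of_compact {d : ℕ} {η : EuclideanSpace ℝ (Fin d) → ℝ} (hη : ContDiff ℝ ∞ η)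
    (hc : HasCompactSupport η) : ∃ C, Nice C η := by
  obtain ⟨C1, h1⟩ := hc.exists_bound_of_continuous hη.continuous
  obtain ⟨C2, h2⟩ := (hc.fderiv (𝕜 := ℝ)).exists_bound_of_continuous
    (hη.continuous_fderiv (by simp))
  have hl : HasCompactSupport (lap η) := by
    refine HasCompactSupport.intro hc fun x hx => ?_
    have : η =ᶠ[nhds x] fun _ => 0 := notMem_tsupport_iff_eventuallyEq.1 hx
    rw [lap_congr this]
    simp [lap]
  obtain ⟨C3, h3⟩ := hl.exists_bound_of_continuous (lap_cont hη)
  refine ⟨max C1 (max C2 C3), hη, fun x => (h1 x).trans (by simp), fun x => (h2 x).trans (by simp),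
    fun x => (h3 x).trans (by simp)⟩

lemma cutoff {d : ℕ} {ψ : EuclideanSpace ℝ (Fin d) → ℝ} {C : ℝ} (hψ : Nice C ψ) :
    ∃ (C' : ℝ) (η : ℕ → EuclideanSpace ℝ (Fin d) → ℝ), (∀ n, Nice C' (η n)) ∧
      (∀ n, HasCompactSupport (η n)) ∧ ∀ x, ∀ᶠ n in atTop, η n =ᶠ[nhds x] ψ := by
  obtain ⟨χ, hχ, hχc, hχ1⟩ : ∃ χ : EuclideanSpace ℝ (Fin d) → ℝ, ContDiff ℝ ∞ χ ∧
      HasCompactSupport χ ∧ ∀ x ∈ Metric.ball (0 : EuclideanSpace ℝ (Fin d)) 1, χ x = 1 := by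
    let χ : ContDiffBump (0 : EuclideanSpace ℝ (Fin d)) := ⟨1, 2, by norm_num, by norm_num⟩
    exact ⟨χ, χ.contDiff, χ.hasCompactSupport, fun x hx =>
      χ.one_of_mem_closedBall (Metric.ball_subset_closedBall hx)⟩
  obtain ⟨K, -, k1, k2, k3⟩ := nice_of_compact hχ hχc
  obtain ⟨p0, p1, p2, p3⟩ := hψ
  have hC : 0 ≤ C := (abs_nonneg _).trans (p1 0)
  have hK : 0 ≤ K := (abs_nonneg _).trans (k1 0)
  obtain ⟨c, hc0, hc1, hct⟩ : ∃ c : ℕ → ℝ, (∀ n, 0 < c n) ∧ (∀ n, c n ≤ 1) ∧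
      Tendsto c atTop (nhds 0) := by
    refine ⟨fun n => 1 / ((n : ℝ) + 1), fun n => by positivity, fun n => ?_,
      tendsto_one_div_add_atTop_nhds_zero_nat⟩
    simp only
    rw [div_le_one (by positivity)]; linarith [(Nat.cast_nonneg n : (0:ℝ) ≤ n)]
  have hχn : ∀ n, ContDiff ℝ ∞ (fun x => χ (c n • x)) := fun n => hχ.comp (contDiff_const_smul (c n))
  have hD : ∀ n x, ‖fderiv ℝ (fun x => χ (c n • x)) x‖ ≤ K := by
    intro n x
    refine ContinuousLinearMap.opNorm_le_bound _ hK fun v => ?_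
    rw [fderiv_scale hχ, norm_mul, Real.norm_of_nonneg (hc0 n).le]
    calc c n * ‖fderiv ℝ χ (c n • x) v‖ ≤ 1 * (K * ‖v‖) := by
          gcongr
          · exact hc1 n
          · exact ContinuousLinearMap.le_of_opNorm_le _ (k2 _) _
      _ = _ := one_mul _
  have hL : ∀ n x, |lap (fun x => χ (c n • x)) x| ≤ K := by
    intro n x
    rw [lap_scale hχ, abs_mul, abs_of_nonneg (by positivity)]
    calc c n ^ 2 * |lap χ (c n • x)| ≤ 1 * K := by
          gcongr
          · exact pow_le_one₀ (hc0 n).le (hc1 n)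
          · exact k3 _
      _ = _ := one_mul _
  refine ⟨4 * K * C + 2 * (d * (K * C)), fun n x => χ (c n • x) * ψ x, fun n => ⟨(hχn n).mul p0, ?_, ?_, ?_⟩, ?_, ?_⟩
  · intro x
    rw [abs_mul]
    have : |χ (c n • x)| * |ψ x| ≤ K * C := by gcongr; exact k1 _; exact p1 _
    have : 0 ≤ (d:ℝ) * (K * C) := by positivity
    nlinarith [mul_nonneg hK hC]
  · intro x
    rw [fderiv_fun_mul ((hχn n).differentiable (by simp) x) (p0.differentiable (by simp) x)]
    refine (norm_add_le _ _).trans ?_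
    rw [norm_smul, norm_smul]
    have a1 : ‖χ (c n • x)‖ * ‖fderiv ℝ ψ x‖ ≤ K * C := by gcongr; exact k1 _; exact p2 _
    have a2 : ‖ψ x‖ * ‖fderiv ℝ (fun x => χ (c n • x)) x‖ ≤ C * K := by
      gcongr; exact p1 _; exact hD _ _
    have : 0 ≤ (d:ℝ) * (K * C) := by positivity
    nlinarith [mul_nonneg hK hC]
  · intro x
    rw [lap_mul (hχn n) p0]
    have a1 : |χ (c n • x) * lap ψ x| ≤ K * C := by
      rw [abs_mul]; gcongr; exact k1 _; exact p3 _
    have a2 : |ψ x * lap (fun x => χ (c n • x)) x| ≤ C * K := by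
      rw [abs_mul]; gcongr; exact p1 _; exact hL _ _
    have a3 : |∑ i, fderiv ℝ (fun x => χ (c n • x)) x (EuclideanSpace.single i 1) *
        fderiv ℝ ψ x (EuclideanSpace.single i 1)| ≤ d * (K * C) := by
      refine (Finset.abs_sum_le_sum_abs _ _).trans ?_
      refine (Finset.sum_le_sum (g := fun _ => K * C) fun i _ => ?_).trans ?_
      · rw [abs_mul]
        have b1 := ContinuousLinearMap.le_of_opNorm_le _ (hD n x) (EuclideanSpace.single i 1)
        have b2 := ContinuousLinearMap.le_of_opNorm_le _ (p2 x) (EuclideanSpace.single i 1)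
        simp only [PiLp.norm_single, norm_one, mul_one, Real.norm_eq_abs] at b1 b2
        gcongr
      · simp
    refine (abs_add_le _ _).trans ?_
    rw [abs_mul 2, abs_two]
    have := abs_add_le (χ (c n • x) * lap ψ x) (ψ x * lap (fun x => χ (c n • x)) x)
    nlinarith [mul_nonneg hK hC]
  · intro n
    apply HasCompactSupport.mul_right
    exact hχc.comp_smul (hc0 n).ne'
  · intro x
    have ht : Tendsto (fun n => c n * ‖x‖) atTop (nhds (0 * ‖x‖)) := hct.mul_const _
    rw [zero_mul] at ht
    filter_upwards [ht.eventually_lt_const one_pos] with n hn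
    have h1 : Continuous (fun y : EuclideanSpace ℝ (Fin d) => c n * ‖y‖) :=
      continuous_const.mul continuous_norm
    filter_upwards [(h1.tendsto x).eventually_lt_const hn] with y hy
    have hy' : c n • y ∈ Metric.ball (0 : EuclideanSpace ℝ (Fin d)) 1 := by
      rw [mem_ball_zero_iff, norm_smul, Real.norm_of_nonneg (hc0 n).le]
      exact hy
    rw [hχ1 _ hy', one_mul]



structure Setup {d : ℕ} (T A M L γ : ℝ) (z w : ℝ → EuclideanSpace ℝ (Fin d) → ℝ)
    (g : ℝ → EuclideanSpace ℝ (Fin d) → EuclideanSpace ℝ (Fin d)) : Prop where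
  hT : 0 < T
  hL : 0 ≤ L
  mz : StronglyMeasurable (Function.uncurry z)
  mw : StronglyMeasurable (Function.uncurry w)
  mg : StronglyMeasurable (Function.uncurry g)
  iz : ∀ t, Integrable (z t)
  hA : ∀ t, ∫ x, |z t x| ≤ A
  hw : ∀ t x, |w t x| ≤ L * |z t x|
  hg : ∀ t x, ‖g t x‖ ≤ L * |z t x|
  hM : ∀ᵐ t ∂(volume.restrict (Ioo 0 T)), ∀ᵐ x, |z t x| ≤ M ∧ γ * z t x ^ 2 ≤ z t x * w t x
  cont : ∀ ψ : EuclideanSpace ℝ (Fin d) → ℝ, Continuous ψ → (∃ C, ∀ x, |ψ x| ≤ C) →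
    Continuous (fun t => ∫ x, z t x * ψ x)
  zero : z 0 =ᵐ[volume] 0
  weak : ∀ φ : ℝ → EuclideanSpace ℝ (Fin d) → ℝ,
    ContDiff ℝ (⊤ : ℕ∞) (Function.uncurry φ) →
    HasCompactSupport (Function.uncurry φ) →
    (∀ p ∈ tsupport (Function.uncurry φ), p.1 ∈ Ioo 0 T) →
    (∫ t in Ioo (0 : ℝ) T, ∫ x,
      (z t x * deriv (fun s => φ s x) t + w t x * lap (φ t) x + fderiv ℝ (φ t) x (g t x))) = 0

namespace Setup

variable {d : ℕ} {T A M L γ : ℝ} {z w : ℝ → EuclideanSpace ℝ (Fin d) → ℝ}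
    {g : ℝ → EuclideanSpace ℝ (Fin d) → EuclideanSpace ℝ (Fin d)}

lemma iw (S : Setup T A M L γ z w g) (t : ℝ) : Integrable (w t) := by
  refine ((S.iz t).abs.const_mul L).mono' ?_ (Eventually.of_forall fun x => S.hw t x)
  exact (S.mw.comp_measurable measurable_prodMk_left).aestronglyMeasurable

lemma ig (S : Setup T A M L γ z w g) (t : ℝ) : Integrable (g t) := by
  refine ((S.iz t).abs.const_mul L).mono' ?_ (Eventually.of_forall fun x => S.hg t x)
  exact (S.mg.comp_measurable measurable_prodMk_left).aestronglyMeasurable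

def kap (w : ℝ → EuclideanSpace ℝ (Fin d) → ℝ)
    (g : ℝ → EuclideanSpace ℝ (Fin d) → EuclideanSpace ℝ (Fin d))
    (η : EuclideanSpace ℝ (Fin d) → ℝ) (s : ℝ) : ℝ :=
  ∫ x, (w s x * lap η x + fderiv ℝ η x (g s x))

lemma kap_sm (S : Setup T A M L γ z w g) {η : EuclideanSpace ℝ (Fin d) → ℝ} (hη : ContDiff ℝ ∞ η) :
    StronglyMeasurable (fun p : ℝ × EuclideanSpace ℝ (Fin d) =>
      w p.1 p.2 * lap η p.2 + fderiv ℝ η p.2 (g p.1 p.2)) := by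
  have h1 : StronglyMeasurable (fun p : ℝ × EuclideanSpace ℝ (Fin d) => lap η p.2) :=
    ((lap_cont hη).comp continuous_snd).stronglyMeasurable
  have h2 : StronglyMeasurable (fun p : ℝ × EuclideanSpace ℝ (Fin d) => fderiv ℝ η p.2) :=
    ((hη.continuous_fderiv (by simp)).comp continuous_snd).stronglyMeasurable
  have h3 : StronglyMeasurable (fun p : ℝ × EuclideanSpace ℝ (Fin d) =>
      fderiv ℝ η p.2 (g p.1 p.2)) :=
    (isBoundedBilinearMap_apply (𝕜 := ℝ) (E := EuclideanSpace ℝ (Fin d)) (F := ℝ)).continuous.comp_stronglyMeasurable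
      (h2.prodMk S.mg)
  exact (S.mw.mul h1).add h3

lemma kap_meas (S : Setup T A M L γ z w g) {η : EuclideanSpace ℝ (Fin d) → ℝ}
    (hη : ContDiff ℝ ∞ η) : StronglyMeasurable (kap w g η) := by
  exact (S.kap_sm hη).integral_prod_right'

lemma kap_bd (S : Setup T A M L γ z w g) {C : ℝ} {η : EuclideanSpace ℝ (Fin d) → ℝ}
    (hη : Nice C η) (s : ℝ) (x : EuclideanSpace ℝ (Fin d)) :
    ‖w s x * lap η x + fderiv ℝ η x (g s x)‖ ≤ 2 * C * L * |z s x| := by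
  have hC : 0 ≤ C := (abs_nonneg _).trans (hη.2.1 0)
  have hL := S.hL
  have h1 : ‖w s x * lap η x‖ ≤ (L * |z s x|) * C := by
    rw [norm_mul]; gcongr
    · exact S.hw s x
    · exact hη.2.2.2 x
  have h2 : ‖fderiv ℝ η x (g s x)‖ ≤ C * (L * |z s x|) := by
    refine (ContinuousLinearMap.le_of_opNorm_le _ (hη.2.2.1 x) _).trans ?_
    gcongr
    exact S.hg s x
  refine (norm_add_le _ _).trans ?_
  linarith

lemma kap_int (S : Setup T A M L γ z w g) {C : ℝ} {η : EuclideanSpace ℝ (Fin d) → ℝ}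
    (hη : Nice C η) (s : ℝ) :
    Integrable (fun x => w s x * lap η x + fderiv ℝ η x (g s x)) := by
  refine ((S.iz s).abs.const_mul (2 * C * L)).mono' ?_ (Eventually.of_forall fun x => S.kap_bd hη s x)
  exact ((S.kap_sm hη.1).comp_measurable measurable_prodMk_left).aestronglyMeasurable

lemma kap_le (S : Setup T A M L γ z w g) {C : ℝ} {η : EuclideanSpace ℝ (Fin d) → ℝ}
    (hη : Nice C η) (s : ℝ) : ‖kap w g η s‖ ≤ 2 * C * L * A := by
  have hC : 0 ≤ C := (abs_nonneg _).trans (hη.2.1 0)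
  have hL := S.hL
  refine (norm_integral_le_of_norm_le ((S.iz s).abs.const_mul (2 * C * L))
    (Eventually.of_forall fun x => S.kap_bd hη s x)).trans ?_
  rw [integral_const_mul]
  gcongr
  exact S.hA s

lemma kap_ii (S : Setup T A M L γ z w g) {C : ℝ} {η : EuclideanSpace ℝ (Fin d) → ℝ}
    (hη : Nice C η) (a b : ℝ) : IntervalIntegrable (kap w g η) volume a b := by
  rw [intervalIntegrable_iff]
  refine Measure.integrableOn_of_bounded (M := 2 * C * L * A) (by simp) 
    (S.kap_meas hη.1).aestronglyMeasurable (Eventually.of_forall fun s => S.kap_le hη s)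

lemma int_mul_nice (S : Setup T A M L γ z w g) {C : ℝ} {η : EuclideanSpace ℝ (Fin d) → ℝ}
    (hη : Nice C η) (s : ℝ) : Integrable (fun x => z s x * η x) :=
  (S.iz s).mul_bdd (c := C) hη.1.continuous.aestronglyMeasurable (Eventually.of_forall hη.2.1)

lemma test_compact (S : Setup T A M L γ z w g) {η : EuclideanSpace ℝ (Fin d) → ℝ}
    (hη : ContDiff ℝ ∞ η) (hc : HasCompactSupport η) :
    ∀ t ∈ Icc 0 T, ∫ x, z t x * η x = ∫ s in (0:ℝ)..t, kap w g η s := by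
  obtain ⟨C, hN⟩ := nice_of_compact hη hc
  have h := time_lemma T S.hT (fun t => ∫ x, z t x * η x) (kap w g η)
    (S.cont η hη.continuous ⟨C, hN.2.1⟩) (S.kap_ii hN 0 T) ?_
  · intro t ht
    rw [h t ht]
    have : ∫ x, z 0 x * η x = 0 := by
      apply integral_eq_zero_of_ae
      filter_upwards [S.zero] with x hx
      simp [hx]
    simp [this]
  intro θ hθ hθc hθs
  have hsub : tsupport (Function.uncurry fun t x => θ t * η x) ⊆ (tsupport θ) ×ˢ (tsupport η) := by
    apply closure_minimal _ ((isClosed_tsupport _).prod (isClosed_tsupport _))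
    rintro ⟨t, x⟩ h
    have h' : θ t * η x ≠ 0 := h
    exact ⟨subset_tsupport _ (left_ne_zero_of_mul h'), subset_tsupport _ (right_ne_zero_of_mul h')⟩
  have := S.weak (fun t x => θ t * η x) ?_ ?_ ?_
  · refine Eq.trans ?_ this
    apply integral_congr_ae
    refine Eventually.of_forall fun t => ?_
    simp only
    rw [kap, ← integral_const_mul, ← integral_const_mul, ← integral_add]
    · congr 1; ext x
      rw [lap_const_mul hη, fderiv_const_mul (hη.differentiable (by simp) x)]
      have : deriv (fun s => θ s * η x) t = deriv θ t * η x :=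
        deriv_mul_const (hθ.differentiable (by simp) t) _
      rw [this]
      simp
      ring
    · exact (S.int_mul_nice hN t).const_mul _
    · exact (S.kap_int hN t).const_mul _
  · exact (hθ.comp contDiff_fst).mul (hη.comp contDiff_snd)
  · exact (hθc.isCompact.prod hc.isCompact).of_isClosed_subset (isClosed_tsupport _) hsub
  · intro p hp
    exact hθs (hsub hp).1

lemma test_nice (S : Setup T A M L γ z w g) {C : ℝ} {ψ : EuclideanSpace ℝ (Fin d) → ℝ}
    (hψ : Nice C ψ) :
    ∀ t ∈ Icc 0 T, ∫ x, z t x * ψ x = ∫ s in (0:ℝ)..t, kap w g ψ s := by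
  intro t ht
  obtain ⟨C', η, h1, h2, h3⟩ := cutoff hψ
  have hC' : 0 ≤ C' := (abs_nonneg _).trans ((h1 0).2.1 0)
  have l1 : Tendsto (fun n => ∫ x, z t x * η n x) atTop (nhds (∫ x, z t x * ψ x)) := by
    apply tendsto_integral_of_dominated_convergence (fun x => |z t x| * C')
    · exact fun n => (S.int_mul_nice (h1 n) t).aestronglyMeasurable
    · exact (S.iz t).abs.mul_const _
    · intro n
      refine Eventually.of_forall fun x => ?_
      rw [norm_mul]
      gcongr
      · exact le_rfl
      · exact (h1 n).2.1 x
    · refine Eventually.of_forall fun x => ?_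
      apply tendsto_const_nhds.congr'
      filter_upwards [h3 x] with n hn
      rw [hn.self_of_nhds]
  have l2 : ∀ s, Tendsto (fun n => kap w g (η n) s) atTop (nhds (kap w g ψ s)) := by
    intro s
    apply tendsto_integral_of_dominated_convergence (fun x => 2 * C' * L * |z s x|)
    · exact fun n => (S.kap_int (h1 n) s).aestronglyMeasurable
    · exact (S.iz s).abs.const_mul _
    · exact fun n => Eventually.of_forall fun x => S.kap_bd (h1 n) s x
    · refine Eventually.of_forall fun x => ?_
      apply tendsto_const_nhds.congr'
      filter_upwards [h3 x] with n hn
      rw [hn.fderiv_eq, lap_congr hn]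
  have l3 : Tendsto (fun n => ∫ s in (0:ℝ)..t, kap w g (η n) s) atTop
      (nhds (∫ s in (0:ℝ)..t, kap w g ψ s)) := by
    apply intervalIntegral.tendsto_integral_filter_of_dominated_convergence
      (fun _ => 2 * C' * L * A)
    · exact Eventually.of_forall fun n => (S.kap_meas (h1 n).1).aestronglyMeasurable
    · exact Eventually.of_forall fun n => Eventually.of_forall fun s _ => S.kap_le (h1 n) s
    · exact intervalIntegrable_const
    · exact Eventually.of_forall fun s _ => l2 s
  refine tendsto_nhds_unique l1 (l3.congr fun n => ?_)
  exact (S.test_compact (h1 n).1 (h2 n) t ht).symm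

end Setup


lemma sq_lemma (T : ℝ) (f h : ℝ → ℝ) (hh : IntervalIntegrable h volume 0 T)
    (hf : ∀ t ∈ Icc 0 T, f t = ∫ s in (0:ℝ)..t, h s) :
    ∀ t ∈ Icc 0 T, f t * f t = ∫ s in (0:ℝ)..t, 2 * (f s * h s) := by
  intro t ht
  let G : ℝ → ℝ := fun t => ∫ s in (0:ℝ)..t, h s
  have hh' : IntervalIntegrable h volume 0 t := hh.mono_set (by
    rw [uIcc_of_le ht.1, uIcc_of_le (ht.1.trans ht.2)]; exact Icc_subset_Icc_right ht.2)
  have hGac : AbsolutelyContinuousOnInterval G 0 t :=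
    hh'.absolutelyContinuousOnInterval_intervalIntegral (by simp)
  have e := hGac.integral_deriv_mul_eq_sub hGac
  have hG0 : G 0 = 0 := by simp [G]
  rw [hG0] at e
  simp only [mul_zero, sub_zero] at e
  rw [hf t ht]
  change G t * G t = _
  rw [← e]
  apply intervalIntegral.integral_congr_ae
  filter_upwards [hh'.ae_hasDerivAt_integral] with x hx hx'
  have := (hx (uIoc_subset_uIcc hx') 0 (by simp)).deriv
  rw [this, hf x]
  · ring
  · rw [uIoc_of_le ht.1] at hx'
    exact ⟨hx'.1.le, hx'.2.trans ht.2⟩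

lemma FT_sm {d : ℕ} (a : ℝ) {k : ℝ → EuclideanSpace ℝ (Fin d) → ℝ}
    (hk : StronglyMeasurable (Function.uncurry k)) :
    StronglyMeasurable (fun p : ℝ × EuclideanSpace ℝ (Fin d) => FT a (k p.1) p.2) := by
  have h1 : StronglyMeasurable (fun q : (ℝ × EuclideanSpace ℝ (Fin d)) × EuclideanSpace ℝ (Fin d) =>
      k q.1.1 q.2) := hk.comp_measurable (by fun_prop : Measurable (fun q : (ℝ × EuclideanSpace ℝ (Fin d)) × EuclideanSpace ℝ (Fin d) => (q.1.1, q.2)))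
  have h2 : StronglyMeasurable (fun q : (ℝ × EuclideanSpace ℝ (Fin d)) × EuclideanSpace ℝ (Fin d) =>
      Real.cos (2 * Real.pi * ⟪q.2, q.1.2⟫ + a)) :=
    (by fun_prop : Continuous _).stronglyMeasurable
  exact (h1.mul h2).integral_prod_right'

lemma FT_le {d : ℕ} (a : ℝ) {f : EuclideanSpace ℝ (Fin d) → ℝ} (hf : Integrable f)
    (ξ : EuclideanSpace ℝ (Fin d)) : |FT a f ξ| ≤ ∫ x, |f x| := by
  have h : ‖∫ x, f x * Real.cos (2 * Real.pi * ⟪x, ξ⟫ + a)‖ ≤ ∫ x, |f x| := by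
    refine norm_integral_le_of_norm_le hf.abs (Eventually.of_forall fun x => ?_)
    rw [norm_mul]
    exact mul_le_of_le_one_right (abs_nonneg _) (Real.abs_cos_le_one _)
  exact h

/-- plane wave -/
def wave {d : ℕ} (a : ℝ) (ξ x : EuclideanSpace ℝ (Fin d)) : ℝ := Real.cos (2 * Real.pi * ⟪x, ξ⟫ + a)

lemma wave_contDiff {d : ℕ} (a : ℝ) (ξ : EuclideanSpace ℝ (Fin d)) : ContDiff ℝ ∞ (wave a ξ) := by
  unfold wave
  apply Real.contDiff_cos.comp
  exact (contDiff_const.mul (contDiff_id.inner ℝ contDiff_const)).add contDiff_const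

lemma wave_fderiv {d : ℕ} (a : ℝ) (ξ x v : EuclideanSpace ℝ (Fin d)) :
    fderiv ℝ (wave a ξ) x v = 2 * Real.pi * ⟪v, ξ⟫ * wave (a + Real.pi / 2) ξ x := by
  have h0 : HasFDerivAt (fun y : EuclideanSpace ℝ (Fin d) => ⟪y, ξ⟫) (innerSL ℝ ξ) x := by
    have := (innerSL ℝ ξ).hasFDerivAt (x := x)
    refine this.congr_of_eventuallyEq (Eventually.of_forall fun y => ?_)
    simp [real_inner_comm]
  have h1 := ((h0.const_mul (2 * Real.pi)).add_const a).cos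
  have h2 : fderiv ℝ (wave a ξ) x = _ := h1.fderiv
  rw [h2]
  simp only [wave, ← add_assoc, Real.cos_add_pi_div_two]
  simp [real_inner_comm]
  ring

lemma wave_lap {d : ℕ} (a : ℝ) (ξ x : EuclideanSpace ℝ (Fin d)) :
    lap (wave a ξ) x = - (2 * Real.pi * ‖ξ‖) ^ 2 * wave a ξ x := by
  unfold lap
  have e : ∀ i : Fin d, fderiv ℝ (fun y => fderiv ℝ (wave a ξ) y (EuclideanSpace.single i 1)) x
      (EuclideanSpace.single i 1) = - (2 * Real.pi)^2 * wave a ξ x * (ξ i) ^ 2 := by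
    intro i
    simp only [wave_fderiv]
    rw [fderiv_const_mul ((wave_contDiff _ _).differentiable (by simp) x)]
    rw [_root_.smul_apply, wave_fderiv]
    have : wave (a + Real.pi / 2 + Real.pi / 2) ξ x = - wave a ξ x := by
      unfold wave
      rw [← Real.cos_add_pi]; congr 1; ring
    rw [this]
    simp [EuclideanSpace.inner_single_left]
    ring
  simp only [e]
  have hn := EuclideanSpace.norm_sq_eq ξ
  simp only [Real.norm_eq_abs, sq_abs] at hn
  rw [← Finset.mul_sum, ← hn]
  ring

lemma wave_nice {d : ℕ} (a : ℝ) (ξ : EuclideanSpace ℝ (Fin d)) : ∃ C, Nice C (wave a ξ) := by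
  refine ⟨1 + 2 * Real.pi * ‖ξ‖ + (2 * Real.pi * ‖ξ‖) ^ 2, wave_contDiff a ξ, fun x => ?_, fun x => ?_,
    fun x => ?_⟩
  · refine (Real.abs_cos_le_one _).trans ?_
    have : 0 ≤ 2 * Real.pi * ‖ξ‖ := by positivity
    nlinarith [sq_nonneg (2 * Real.pi * ‖ξ‖)]
  · refine ContinuousLinearMap.opNorm_le_bound _ (by positivity) fun v => ?_
    rw [wave_fderiv, norm_mul, norm_mul]
    have h1 : ‖wave (a + Real.pi / 2) ξ x‖ ≤ 1 := Real.abs_cos_le_one _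
    have h2 := norm_inner_le_norm (𝕜 := ℝ) v ξ
    have h3 : ‖2 * Real.pi‖ = 2 * Real.pi := Real.norm_of_nonneg (by positivity)
    rw [h3]
    calc 2 * Real.pi * ‖⟪v, ξ⟫‖ * ‖wave (a + Real.pi / 2) ξ x‖
        ≤ 2 * Real.pi * (‖v‖ * ‖ξ‖) * 1 := by gcongr
      _ = (0 + 2 * Real.pi * ‖ξ‖ + 0) * ‖v‖ := by ring
      _ ≤ _ := by gcongr <;> positivity
  · rw [wave_lap, abs_mul]
    have h1 : |wave a ξ x| ≤ 1 := Real.abs_cos_le_one _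
    rw [abs_neg, abs_of_nonneg (sq_nonneg _)]
    have : 0 ≤ 2 * Real.pi * ‖ξ‖ := by positivity
    nlinarith [sq_nonneg (2 * Real.pi * ‖ξ‖)]

namespace Setup

variable {d : ℕ} {T A M L γ : ℝ} {z w : ℝ → EuclideanSpace ℝ (Fin d) → ℝ}
    {g : ℝ → EuclideanSpace ℝ (Fin d) → EuclideanSpace ℝ (Fin d)}

lemma kap_wave (S : Setup T A M L γ z w g) (a : ℝ) (ξ : EuclideanSpace ℝ (Fin d)) (s : ℝ) :
    kap w g (wave a ξ) s = - (2 * Real.pi * ‖ξ‖) ^ 2 * FT a (w s) ξ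
      + ∑ i, (2 * Real.pi * ξ i) * FT (a + Real.pi / 2) (fun x => g s x i) ξ := by
  have hgi : ∀ i, Integrable (fun x => g s x i) := fun i => by
    refine (S.ig s).norm.mono' ?_ (Eventually.of_forall fun x => PiLp.norm_apply_le _ i)
    exact (EuclideanSpace.proj (𝕜 := ℝ) i).continuous.comp_aestronglyMeasurable (S.ig s).1
  unfold kap FT
  simp only [← integral_const_mul]
  rw [← integral_finsetSum, ← integral_add]
  · congr 1; ext x
    rw [wave_lap, wave_fderiv, PiLp.inner_apply, Finset.mul_sum, Finset.sum_mul]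
    congr 1
    · simp only [wave]; ring
    · refine Finset.sum_congr rfl fun i _ => ?_
      simp [wave]; ring
  · exact (int_cos _ _ _ (S.iw s)).const_mul _
  · exact integrable_finsetSum _ fun i _ => (int_cos _ _ _ (hgi i)).const_mul _
  · exact fun i _ => (int_cos _ _ _ (hgi i)).const_mul _

lemma ode (S : Setup T A M L γ z w g) (a : ℝ) (ξ : EuclideanSpace ℝ (Fin d)) :
    ∀ t ∈ Icc 0 T, (FT a (z t) ξ) * (FT a (z t) ξ) =
      ∫ s in (0:ℝ)..t, 2 * (FT a (z s) ξ * kap w g (wave a ξ) s) := by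
  obtain ⟨C, hC⟩ := wave_nice a ξ
  exact sq_lemma T (fun t => FT a (z t) ξ) (kap w g (wave a ξ)) (S.kap_ii hC 0 T)
    (fun t ht => S.test_nice hC t ht)

structure Dom (z : ℝ → EuclideanSpace ℝ (Fin d) → ℝ) (D : ℝ)
    (k : ℝ → EuclideanSpace ℝ (Fin d) → ℝ) : Prop where
  sm : StronglyMeasurable (Function.uncurry k)
  le : ∀ t x, |k t x| ≤ D * |z t x|
  nn : 0 ≤ D

lemma dz (S : Setup T A M L γ z w g) : Dom z 1 z := ⟨S.mz, fun t x => by simp, zero_le_one⟩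
lemma dw (S : Setup T A M L γ z w g) : Dom z L w := ⟨S.mw, S.hw, S.hL⟩
lemma dg (S : Setup T A M L γ z w g) (i : Fin d) : Dom z L (fun t x => g t x i) := by
  refine ⟨?_, fun t x => ?_, S.hL⟩
  · exact (EuclideanSpace.proj (𝕜 := ℝ) i).continuous.comp_stronglyMeasurable S.mg
  · exact (PiLp.norm_apply_le _ i).trans (S.hg t x)

def Good (M A : ℝ) (z : ℝ → EuclideanSpace ℝ (Fin d) → ℝ) (s : ℝ) : Prop :=
  MemLp (z s) 2 ∧ ∫ x, (z s x)^2 ≤ |M| * A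

lemma good_ae (S : Setup T A M L γ z w g) : ∀ᵐ s ∂(volume.restrict (Ioo 0 T)), Good M A z s := by
  filter_upwards [S.hM] with s hs
  have hi : Integrable (fun x => |M| * |z s x|) := (S.iz s).abs.const_mul _
  have hle : ∀ᵐ x, (z s x)^2 ≤ |M| * |z s x| := by
    filter_upwards [hs] with x hx
    have h1 := hx.1.trans (le_abs_self M)
    nlinarith [abs_nonneg (z s x), sq_abs (z s x)]
  have hsq : Integrable (fun x => (z s x)^2) := by
    refine hi.mono' ((S.iz s).1.pow 2) ?_
    filter_upwards [hle] with x hx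
    rwa [Real.norm_of_nonneg (sq_nonneg _)]
  refine ⟨(memLp_two_iff_integrable_sq (S.iz s).1).2 hsq, ?_⟩
  refine (integral_mono_ae hsq hi hle).trans ?_
  rw [integral_const_mul]
  gcongr
  exact S.hA s

lemma dom_int (S : Setup T A M L γ z w g) {D : ℝ} {k : ℝ → EuclideanSpace ℝ (Fin d) → ℝ}
    (hk : Dom z D k) (t : ℝ) : Integrable (k t) := by
  refine ((S.iz t).abs.const_mul D).mono' ?_ (Eventually.of_forall fun x => hk.le t x)
  exact (hk.sm.comp_measurable measurable_prodMk_left).aestronglyMeasurable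

lemma dom_bd (S : Setup T A M L γ z w g) {D : ℝ} {k : ℝ → EuclideanSpace ℝ (Fin d) → ℝ}
    (hk : Dom z D k) (a t : ℝ) (ξ : EuclideanSpace ℝ (Fin d)) : |FT a (k t) ξ| ≤ D * A := by
  refine (FT_le a (S.dom_int hk t) ξ).trans ?_
  refine (integral_mono (S.dom_int hk t).abs ((S.iz t).abs.const_mul D) (hk.le t)).trans ?_
  rw [integral_const_mul]
  have := hk.nn
  gcongr
  exact S.hA t

lemma dom_memLp (S : Setup T A M L γ z w g) {D : ℝ} {k : ℝ → EuclideanSpace ℝ (Fin d) → ℝ}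
    (hk : Dom z D k) {s : ℝ} (hs : Good M A z s) :
    MemLp (k s) 2 ∧ ∫ x, (k s x)^2 ≤ D ^ 2 * ∫ x, (z s x)^2 := by
  have h1 : MemLp (k s) 2 := hs.1.of_le_mul (S.dom_int hk s).1 (Eventually.of_forall (hk.le s))
  refine ⟨h1, ?_⟩
  rw [← integral_const_mul]
  refine integral_mono h1.integrable_sq (hs.1.integrable_sq.const_mul _) fun x => ?_
  have := hk.le s x
  simp only
  rw [← sq_abs (k s x), ← sq_abs (z s x), ← mul_pow]
  gcongr

lemma dom_FT_memLp (S : Setup T A M L γ z w g) {D : ℝ} {k : ℝ → EuclideanSpace ℝ (Fin d) → ℝ}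
    (hk : Dom z D k) (a : ℝ) :
    MemLp (fun p : ℝ × EuclideanSpace ℝ (Fin d) => FT a (k p.1) p.2) 2
      ((volume.restrict (Ioo 0 T)).prod volume) := by
  have hsm := FT_sm a hk.sm
  have hsm2 : StronglyMeasurable (fun p : ℝ × EuclideanSpace ℝ (Fin d) => FT a (k p.1) p.2 ^ 2) :=
    hsm.pow 2
  rw [memLp_two_iff_integrable_sq hsm.aestronglyMeasurable]
  rw [integrable_prod_iff hsm2.aestronglyMeasurable]
  constructor
  · filter_upwards [S.good_ae] with s hs
    exact (FT_memLp a _ (S.dom_int hk s) (S.dom_memLp hk hs).1).integrable_sq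
  · have : IsFiniteMeasure (volume.restrict (Ioo 0 T)) := ⟨by simp⟩
    refine Integrable.of_bound (C := D ^ 2 * (|M| * A)) ?_ ?_
    · exact (hsm2.norm.integral_prod_right').aestronglyMeasurable
    · filter_upwards [S.good_ae] with s hs
      have h1 := FT_sq_le a _ (S.dom_int hk s) (S.dom_memLp hk hs).1
      have h2 := (S.dom_memLp hk hs).2
      simp only [norm_pow, Real.norm_eq_abs, sq_abs]
      rw [abs_of_nonneg (integral_nonneg fun _ => sq_nonneg _)]
      refine h1.trans (h2.trans ?_)
      gcongr
      exact hs.2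

end Setup


lemma gron (T c B : ℝ) (hc : 0 ≤ c) (E : ℝ → ℝ) (hm : StronglyMeasurable E)
    (hB : ∀ᵐ t ∂(volume.restrict (Ioo 0 T)), 0 ≤ E t ∧ E t ≤ B)
    (hE : ∀ᵐ t ∂(volume.restrict (Ioo 0 T)), E t ≤ c * ∫ s in Ioc 0 t, E s) :
    ∀ᵐ t ∂(volume.restrict (Ioo 0 T)), E t = 0 := by
  have key : ∀ n : ℕ, ∀ᵐ t ∂(volume.restrict (Ioo 0 T)), E t ≤ B * ((c * t) ^ n / n.factorial) := by
    intro n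
    induction n with
    | zero => filter_upwards [hB] with t ht; simpa using ht.2
    | succ n ih =>
      filter_upwards [hE, ae_restrict_mem measurableSet_Ioo] with t ht htm
      have hsub : Ioc 0 t ⊆ Ioo 0 T := fun s hs => ⟨hs.1, hs.2.trans_lt htm.2⟩
      have hle := ae_mono (Measure.restrict_mono hsub (le_refl volume))
      have ih' := hle ih
      have hB' := hle hB
      have hcont : Continuous (fun s : ℝ => B * ((c * s) ^ n / n.factorial)) := by fun_prop
      have hi : IntegrableOn E (Ioc 0 t) := by
        refine Measure.integrableOn_of_bounded (M := B) (by simp) hm.aestronglyMeasurable ?_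
        filter_upwards [hB'] with s hs
        rw [Real.norm_of_nonneg hs.1]; exact hs.2
      have h1 : ∫ s in Ioc 0 t, E s ≤ ∫ s in Ioc 0 t, B * ((c * s) ^ n / n.factorial) :=
        integral_mono_ae hi ((hcont.integrableOn_Icc (a := 0) (b := t)).mono_set Ioc_subset_Icc_self) ih'
      have h2 : ∫ s in Ioc 0 t, B * ((c * s) ^ n / n.factorial)
          = B * (c ^ n * (t ^ (n + 1) / (n + 1)) / n.factorial) := by
        rw [← intervalIntegral.integral_of_le htm.1.le, intervalIntegral.integral_const_mul,
          intervalIntegral.integral_div]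
        simp only [mul_pow]
        rw [intervalIntegral.integral_const_mul, integral_pow]
        simp
      refine ht.trans ((mul_le_mul_of_nonneg_left (h1.trans_eq h2) hc).trans_eq ?_)
      rw [Nat.factorial_succ]
      push_cast
      have : (n : ℝ) + 1 ≠ 0 := by positivity
      have : (n.factorial : ℝ) ≠ 0 := by positivity
      field_simp
      ring
  filter_upwards [ae_all_iff.2 key, hB] with t ht hb
  refine le_antisymm ?_ hb.1
  have := (FloorSemiring.tendsto_pow_div_factorial_atTop (c * t)).const_mul B
  rw [mul_zero] at this
  exact ge_of_tendsto' this ht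

lemma young1 {K m f g y : ℝ} (hK : 0 < K) (hm : 0 ≤ m) (hy : m * y ^ 2 ≤ 1) :
    2 * m * y * f * g ≤ K * m * f ^ 2 + 1 / K * g ^ 2 := by
  have h1 : 0 ≤ m / K * (K * f - y * g) ^ 2 := by positivity
  have h2 : m / K * (K * f - y * g) ^ 2 = K * m * f ^ 2 - 2 * m * y * f * g + 1 / K * ((m * y ^ 2) * g ^ 2) := by
    field_simp
    ring
  have h3 : 1 / K * ((m * y ^ 2) * g ^ 2) ≤ 1 / K * (1 * g ^ 2) := by gcongr
  linarith

def mm {d : ℕ} (ξ : EuclideanSpace ℝ (Fin d)) : ℝ := 1 / (1 + (2 * Real.pi * ‖ξ‖) ^ 2)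

lemma mm_cont {d : ℕ} : Continuous (mm (d := d)) := by
  unfold mm
  refine continuous_const.div (by fun_prop) fun x => by positivity

lemma mm_pos {d : ℕ} (ξ : EuclideanSpace ℝ (Fin d)) : 0 < mm ξ := by unfold mm; positivity
lemma mm_le {d : ℕ} (ξ : EuclideanSpace ℝ (Fin d)) : mm ξ ≤ 1 := by
  unfold mm
  rw [div_le_one (by positivity)]
  nlinarith [sq_nonneg (2 * Real.pi * ‖ξ‖)]
lemma mm_eq {d : ℕ} (ξ : EuclideanSpace ℝ (Fin d)) : mm ξ * (2 * Real.pi * ‖ξ‖) ^ 2 = 1 - mm ξ := by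
  unfold mm
  have : 1 + (2 * Real.pi * ‖ξ‖) ^ 2 ≠ 0 := by positivity
  field_simp
  ring
lemma mm_i {d : ℕ} (ξ : EuclideanSpace ℝ (Fin d)) (i : Fin d) : mm ξ * (2 * Real.pi * ξ i) ^ 2 ≤ 1 := by
  have h : (2 * Real.pi * ξ i) ^ 2 ≤ (2 * Real.pi * ‖ξ‖) ^ 2 := by
    rw [mul_pow, mul_pow (2 * Real.pi)]
    have := PiLp.norm_apply_le ξ i
    rw [← sq_abs (ξ i)]
    gcongr
    exact this
  have := mul_le_mul_of_nonneg_left h (mm_pos ξ).le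
  rw [mm_eq] at this
  linarith [mm_pos ξ]

namespace Setup

variable {d : ℕ} {T A M L γ : ℝ} {z w : ℝ → EuclideanSpace ℝ (Fin d) → ℝ}
    {g : ℝ → EuclideanSpace ℝ (Fin d) → EuclideanSpace ℝ (Fin d)}

def Ra (K : ℝ) (z w : ℝ → EuclideanSpace ℝ (Fin d) → ℝ)
    (g : ℝ → EuclideanSpace ℝ (Fin d) → EuclideanSpace ℝ (Fin d)) (a : ℝ)
    (s : ℝ) (ξ : EuclideanSpace ℝ (Fin d)) : ℝ :=
  -2 * (FT a (z s) ξ * FT a (w s) ξ) + (1 + d) * K * (mm ξ * FT a (z s) ξ ^ 2)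
    + 1 / K * (FT a (w s) ξ ^ 2 + ∑ i, FT (a + Real.pi / 2) (fun x => g s x i) ξ ^ 2)

lemma Ra_ge (S : Setup T A M L γ z w g) {K : ℝ} (hK : 0 < K) (a s : ℝ) (ξ : EuclideanSpace ℝ (Fin d)) :
    mm ξ * (2 * (FT a (z s) ξ * kap w g (wave a ξ) s)) ≤ Ra K z w g a s ξ := by
  rw [S.kap_wave]
  unfold Ra
  set f := FT a (z s) ξ
  set W := FT a (w s) ξ
  have h1 := young1 (f := f) (g := W) (y := 1) hK (mm_pos ξ).le (by simpa using mm_le ξ)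
  have h2 : ∑ i, 2 * mm ξ * (2 * Real.pi * ξ i) * f * FT (a + Real.pi / 2) (fun x => g s x i) ξ ≤
      ∑ i, (K * mm ξ * f ^ 2 + 1 / K * FT (a + Real.pi / 2) (fun x => g s x i) ξ ^ 2) :=
    Finset.sum_le_sum fun i _ => young1 hK (mm_pos ξ).le (mm_i ξ i)
  rw [Finset.sum_add_distrib, ← Finset.mul_sum Finset.univ _ (1 / K)] at h2
  simp only [Finset.sum_const, Finset.card_univ, Fintype.card_fin, nsmul_eq_mul] at h2
  have h3 : mm ξ * (2 * (f * (-(2 * Real.pi * ‖ξ‖) ^ 2 * W + ∑ i, 2 * Real.pi * ξ i * FT (a + Real.pi / 2) (fun x => g s x i) ξ)))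
      = -2 * (mm ξ * (2 * Real.pi * ‖ξ‖) ^ 2) * f * W +
       ∑ i, 2 * mm ξ * (2 * Real.pi * ξ i) * f * FT (a + Real.pi / 2) (fun x => g s x i) ξ := by
    have : ∑ i, 2 * mm ξ * (2 * Real.pi * ξ i) * f * FT (a + Real.pi / 2) (fun x => g s x i) ξ
       = 2 * mm ξ * f * ∑ i, (2 * Real.pi * ξ i) * FT (a + Real.pi / 2) (fun x => g s x i) ξ := by
      rw [Finset.mul_sum]
      exact Finset.sum_congr rfl fun i _ => by ring
    rw [this]; ring
  rw [h3, mm_eq]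
  linarith

lemma FT_prod_int (S : Setup T A M L γ z w g) {D D' : ℝ} {k l : ℝ → EuclideanSpace ℝ (Fin d) → ℝ}
    (hk : Dom z D k) (hl : Dom z D' l) (a : ℝ) :
    Integrable (fun p : ℝ × EuclideanSpace ℝ (Fin d) => FT a (k p.1) p.2 * FT a (l p.1) p.2)
      ((volume.restrict (Ioo 0 T)).prod volume) :=
  (S.dom_FT_memLp hk a).integrable_mul (S.dom_FT_memLp hl a)

lemma FT_sq_int (S : Setup T A M L γ z w g) {D : ℝ} {k : ℝ → EuclideanSpace ℝ (Fin d) → ℝ}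
    (hk : Dom z D k) (a : ℝ) :
    Integrable (fun p : ℝ × EuclideanSpace ℝ (Fin d) => FT a (k p.1) p.2 ^ 2)
      ((volume.restrict (Ioo 0 T)).prod volume) :=
  (S.dom_FT_memLp hk a).integrable_sq

lemma Ra_int (S : Setup T A M L γ z w g) (K a : ℝ) :
    Integrable (fun p : ℝ × EuclideanSpace ℝ (Fin d) => Ra K z w g a p.1 p.2)
      ((volume.restrict (Ioo 0 T)).prod volume) := by
  unfold Ra
  refine (((S.FT_prod_int S.dz S.dw a).const_mul _).add (Integrable.const_mul ?_ _)).add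
    (((S.FT_sq_int S.dw a).add (integrable_finsetSum _ fun i _ => S.FT_sq_int (S.dg i) _)).const_mul _)
  refine (S.FT_sq_int S.dz a).bdd_mul (c := 1) (mm_cont.comp continuous_snd).aestronglyMeasurable
    (Eventually.of_forall fun p => ?_)
  rw [Real.norm_of_nonneg (mm_pos _).le]
  exact mm_le _

lemma en_pt (S : Setup T A M L γ z w g) {K : ℝ} (hK : 0 < K) (a : ℝ) :
    ∀ᵐ ξ : EuclideanSpace ℝ (Fin d), ∀ t ∈ Ioo 0 T,
      mm ξ * FT a (z t) ξ ^ 2 ≤ ∫ s in Ioc 0 t, Ra K z w g a s ξ := by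
  filter_upwards [(S.Ra_int K a).prod_left_ae] with ξ hξ t ht
  have hsub : Ioc 0 t ⊆ Ioo 0 T := fun s hs => ⟨hs.1, hs.2.trans_lt ht.2⟩
  rw [pow_two, S.ode a ξ t ⟨ht.1.le, ht.2.le⟩, intervalIntegral.integral_of_le ht.1.le,
    ← integral_const_mul]
  refine integral_mono ?_ (IntegrableOn.mono_set hξ hsub) fun s => S.Ra_ge hK a s ξ
  refine Integrable.const_mul (Integrable.const_mul ?_ _) _
  obtain ⟨C, hC⟩ := wave_nice a ξ
  have h1 := (S.kap_ii hC 0 t).1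
  refine Integrable.bdd_mul (c := 1 * A) h1 ?_ (Eventually.of_forall fun s => S.dom_bd S.dz a s ξ)
  exact ((FT_sm a S.mz).comp_measurable measurable_prodMk_right).aestronglyMeasurable

def En (z : ℝ → EuclideanSpace ℝ (Fin d) → ℝ) (a t : ℝ) : ℝ := ∫ ξ, mm ξ * FT a (z t) ξ ^ 2

lemma En_int (S : Setup T A M L γ z w g) {t : ℝ} (ht : Good M A z t) (a : ℝ) :
    Integrable (fun ξ => mm ξ * FT a (z t) ξ ^ 2) := by
  refine (FT_memLp a _ (S.iz t) ht.1).integrable_sq.bdd_mul (c := 1) mm_cont.aestronglyMeasurable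
    (Eventually.of_forall fun p => ?_)
  rw [Real.norm_of_nonneg (mm_pos _).le]
  exact mm_le _

lemma En_sm (S : Setup T A M L γ z w g) (a : ℝ) : StronglyMeasurable (En z a) := by
  have h1 : StronglyMeasurable (fun p : ℝ × EuclideanSpace ℝ (Fin d) => mm p.2 * FT a (z p.1) p.2 ^ 2) :=
    (mm_cont.comp continuous_snd).stronglyMeasurable.mul ((FT_sm a S.mz).pow 2)
  exact h1.integral_prod_right'

lemma En_le (S : Setup T A M L γ z w g) {t : ℝ} (ht : Good M A z t) (a : ℝ) :
    0 ≤ En z a t ∧ En z a t ≤ |M| * A := by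
  refine ⟨integral_nonneg fun ξ => mul_nonneg (mm_pos ξ).le (sq_nonneg _), ?_⟩
  refine (integral_mono (S.En_int ht a) (FT_memLp a _ (S.iz t) ht.1).integrable_sq fun ξ => ?_).trans
    ((FT_sq_le a _ (S.iz t) ht.1).trans ht.2)
  exact mul_le_of_le_one_left (sq_nonneg _) (mm_le ξ)

lemma En_est (S : Setup T A M L γ z w g) {K : ℝ} (hK : 0 < K) (a : ℝ) {t : ℝ} (ht : t ∈ Ioo 0 T)
    (hg : Good M A z t) : En z a t ≤ ∫ s in Ioc 0 t, ∫ ξ, Ra K z w g a s ξ := by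
  have hsub : Ioc 0 t ⊆ Ioo 0 T := fun s hs => ⟨hs.1, hs.2.trans_lt ht.2⟩
  have hi : Integrable (fun p : ℝ × EuclideanSpace ℝ (Fin d) => Ra K z w g a p.1 p.2)
      ((volume.restrict (Ioc 0 t)).prod volume) :=
    (S.Ra_int K a).mono_measure (Measure.prod_mono (Measure.restrict_mono hsub le_rfl) le_rfl)
  rw [integral_integral_swap hi]
  refine integral_mono_ae (S.En_int hg a) hi.integral_prod_right ?_
  filter_upwards [S.en_pt hK a] with ξ hξ
  exact hξ t ht

lemma Ra_le (S : Setup T A M L γ z w g) {K : ℝ} (hK : 0 < K) (a : ℝ) {s : ℝ} (hs : Good M A z s) :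
    Integrable (Ra K z w g a s) ∧ 
    ∫ ξ, Ra K z w g a s ξ ≤ -2 * (∫ ξ, FT a (z s) ξ * FT a (w s) ξ) + (1 + d) * K * En z a s
      + 1 / K * ((1 + d) * (L ^ 2 * ∫ x, z s x ^ 2)) := by
  have i1 : Integrable (fun ξ => FT a (z s) ξ * FT a (w s) ξ) :=
    (FT_memLp a _ (S.iz s) hs.1).integrable_mul (FT_memLp a _ (S.iw s) (S.dom_memLp S.dw hs).1)
  have i2 := S.En_int hs a
  have i3 := (FT_memLp a _ (S.iw s) (S.dom_memLp S.dw hs).1).integrable_sq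
  have i4 : ∀ i, Integrable (fun ξ => FT (a + Real.pi / 2) (fun x => g s x i) ξ ^ 2) := fun i =>
    (FT_memLp (a + Real.pi / 2) _ (S.dom_int (S.dg i) s) (S.dom_memLp (S.dg i) hs).1).integrable_sq
  have i5 : Integrable (fun ξ => ∑ i, FT (a + Real.pi / 2) (fun x => g s x i) ξ ^ 2) := 
    integrable_finsetSum _ fun i _ => i4 i
  have i6 : Integrable (fun ξ => -2 * (FT a (z s) ξ * FT a (w s) ξ) + (1 + d) * K * (mm ξ * FT a (z s) ξ ^ 2)) :=
    (i1.const_mul _).add (i2.const_mul _)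
  have i7 : Integrable (fun ξ => FT a (w s) ξ ^ 2 + ∑ i, FT (a + Real.pi / 2) (fun x => g s x i) ξ ^ 2) :=
    i3.add i5
  refine ⟨i6.add (i7.const_mul _), ?_⟩
  unfold Ra
  rw [integral_add i6 (i7.const_mul _), integral_add (i1.const_mul _) (i2.const_mul _),
    integral_const_mul, integral_const_mul, integral_const_mul, integral_add i3 i5,
    integral_finsetSum _ fun i _ => i4 i]
  have h1 : ∫ ξ, FT a (w s) ξ ^ 2 ≤ L ^ 2 * ∫ x, z s x ^ 2 :=
    (FT_sq_le a _ (S.iw s) (S.dom_memLp S.dw hs).1).trans (S.dom_memLp S.dw hs).2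
  have h2 : ∑ i, ∫ ξ, FT (a + Real.pi / 2) (fun x => g s x i) ξ ^ 2 ≤ ∑ i : Fin d, L ^ 2 * ∫ x, z s x ^ 2 :=
    Finset.sum_le_sum fun i _ =>
    (FT_sq_le _ _ (S.dom_int (S.dg i) s) (S.dom_memLp (S.dg i) hs).1).trans (S.dom_memLp (S.dg i) hs).2
  simp only [Finset.sum_const, Finset.card_univ, Fintype.card_fin, nsmul_eq_mul] at h2
  unfold En
  gcongr
  linarith

lemma En_zero (S : Setup T A M L γ z w g) (hγ : 0 < γ) :
    ∀ᵐ t ∂(volume.restrict (Ioo 0 T)), En z 0 t + En z (Real.pi / 2) t = 0 := by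
  let K : ℝ := (1 + d) * L ^ 2 / γ + 1
  have hK : 0 < K := by positivity
  have hKγ : 1 / K * ((1 + d) * L ^ 2) ≤ γ := by
    rw [one_div, inv_mul_le_iff₀ hK]
    have : K * γ = (1 + d) * L ^ 2 + γ := by simp only [K]; field_simp
    linarith
  refine gron T ((1 + d) * K) (2 * (|M| * A)) (by positivity) _
    ((S.En_sm 0).add (S.En_sm _)) ?_ ?_
  · filter_upwards [S.good_ae] with t ht
    have h1 := S.En_le ht 0
    have h2 := S.En_le ht (Real.pi / 2)
    constructor <;> linarith
  · filter_upwards [S.good_ae, ae_restrict_mem measurableSet_Ioo] with t ht htm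
    have hsub : Ioc 0 t ⊆ Ioo 0 T := fun s hs => ⟨hs.1, hs.2.trans_lt htm.2⟩
    have hle := Measure.restrict_mono hsub (le_refl volume)
    have e1 := S.En_est hK 0 htm ht
    have e2 := S.En_est hK (Real.pi / 2) htm ht
    have j : ∀ a, Integrable (fun s => ∫ ξ, Ra K z w g a s ξ) (volume.restrict (Ioc 0 t)) :=
      fun a => (S.Ra_int K a).integral_prod_left.mono_measure hle
    refine (add_le_add e1 e2).trans ?_
    rw [← integral_add (j _) (j _), ← integral_const_mul]
    refine integral_mono_ae ((j _).add (j _)) ?_ ?_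
    · refine Integrable.const_mul ?_ _
      refine Measure.integrableOn_of_bounded (M := 2 * (|M| * A)) (by simp)
        ((S.En_sm 0).add (S.En_sm _)).aestronglyMeasurable ?_
      filter_upwards [ae_mono hle S.good_ae] with s hs
      have h1 := S.En_le hs 0
      have h2 := S.En_le hs (Real.pi / 2)
      rw [Real.norm_of_nonneg (by linarith)]
      linarith
    · filter_upwards [ae_mono hle S.good_ae, ae_mono hle S.hM] with s hs hsM
      have r1 := (S.Ra_le hK 0 hs).2
      have r2 := (S.Ra_le hK (Real.pi / 2) hs).2
      have hw2 := (S.dom_memLp S.dw hs).1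
      have p := plancherel _ _ (S.iz s) hs.1 (S.iw s) hw2
      have ii : ∀ a, Integrable (fun ξ => FT a (z s) ξ * FT a (w s) ξ) := fun a =>
        (FT_memLp _ _ (S.iz s) hs.1).integrable_mul (FT_memLp _ _ (S.iw s) hw2)
      rw [integral_add (ii _) (ii _)] at p
      have q : γ * ∫ x, z s x ^ 2 ≤ ∫ x, z s x * w s x := by
        rw [← integral_const_mul]
        refine integral_mono_ae (hs.1.integrable_sq.const_mul _) (hs.1.integrable_mul hw2) ?_
        filter_upwards [hsM] with x hx using hx.2
      have hz : 0 ≤ ∫ x, z s x ^ 2 := integral_nonneg fun _ => sq_nonneg _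
      have hh := mul_le_mul_of_nonneg_right hKγ hz
      have e3 : 1 / K * ((1 + (d:ℝ)) * (L ^ 2 * ∫ x, z s x ^ 2)) = 1 / K * ((1 + d) * L ^ 2) * ∫ x, z s x ^ 2 := by
        ring
      rw [e3] at r1 r2
      linarith

lemma zero_ae (S : Setup T A M L γ z w g) (hγ : 0 < γ) :
    ∀ᵐ t ∂(volume.restrict (Ioo 0 T)), z t =ᵐ[volume] 0 := by
  filter_upwards [S.En_zero hγ, S.good_ae] with t ht hg
  have f : ∀ a, En z a t = 0 → ∀ᵐ ξ, FT a (z t) ξ = 0 := by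
    intro a h
    have := (integral_eq_zero_iff_of_nonneg (fun ξ => mul_nonneg (mm_pos ξ).le (sq_nonneg _))
      (S.En_int hg a)).1 h
    filter_upwards [this] with ξ hξ
    have hξ' : mm ξ * FT a (z t) ξ ^ 2 = 0 := hξ
    rcases mul_eq_zero.1 hξ' with h | h
    · exact absurd h (mm_pos ξ).ne'
    · exact pow_eq_zero_iff (two_ne_zero) |>.1 h
  have h0 := S.En_le hg 0
  have h1 := S.En_le hg (Real.pi / 2)
  have p := plancherel _ _ (S.iz t) hg.1 (S.iz t) hg.1
  have p0 : ∫ ξ, (FT 0 (z t) ξ * FT 0 (z t) ξ + FT (Real.pi / 2) (z t) ξ * FT (Real.pi / 2) (z t) ξ) = 0 := by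
    apply integral_eq_zero_of_ae
    filter_upwards [f 0 (by linarith), f (Real.pi / 2) (by linarith)] with ξ ha hb
    simp [ha, hb]
  rw [p0] at p
  have := (integral_eq_zero_iff_of_nonneg (fun x => mul_self_nonneg (z t x))
    (hg.1.integrable_mul hg.1)).1 p.symm
  filter_upwards [this] with x hx
  exact mul_self_eq_zero.1 hx

theorem final (S : Setup T A M L γ z w g) (hγ : 0 < γ) : ∀ t ∈ Icc 0 T, z t =ᵐ[volume] 0 := by
  intro t ht
  refine ae_eq_zero_of_integral_contDiff_smul_eq_zero (S.iz t).locallyIntegrable fun ψ hψ hc => ?_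
  obtain ⟨C, hC⟩ := nice_of_compact hψ hc
  have hcont := S.cont ψ hψ.continuous ⟨C, hC.2.1⟩
  have h0 : ∀ᵐ s ∂(volume.restrict (Ioo 0 T)), (∫ x, z s x * ψ x) = 0 := by
    filter_upwards [S.zero_ae hγ] with s hs
    apply integral_eq_zero_of_ae
    filter_upwards [hs] with x hx
    simp [hx]
  have h1 : EqOn (fun s => ∫ x, z s x * ψ x) (fun _ => 0) (Ioo 0 T) :=
    Measure.eqOn_open_of_ae_eq h0 isOpen_Ioo hcont.continuousOn continuousOn_const
  have h2 := h1.closure hcont continuous_const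
  rw [closure_Ioo S.hT.ne] at h2
  have := h2 ht
  simpa [mul_comm] using this

end Setup


lemma meas_version {d : ℕ} {u : ℝ → EuclideanSpace ℝ (Fin d) → ℝ} (hi : ∀ t, Integrable (u t))
    (hc : ∀ ψ : EuclideanSpace ℝ (Fin d) → ℝ, Continuous ψ → (∃ C, ∀ x, |ψ x| ≤ C) →
      Continuous (fun t => ∫ x, u t x * ψ x)) :
    ∃ v : ℝ → EuclideanSpace ℝ (Fin d) → ℝ, StronglyMeasurable (Function.uncurry v) ∧
      ∀ t, v t =ᵐ[volume] u t := by
  let φ : ℕ → ContDiffBump (0 : EuclideanSpace ℝ (Fin d)) := fun n =>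
    ⟨1 / ((n : ℝ) + 1), 2 * (1 / ((n : ℝ) + 1)), by positivity, by
      have : 0 < 1 / ((n : ℝ) + 1) := by positivity
      linarith⟩
  let ρ : ℕ → EuclideanSpace ℝ (Fin d) → ℝ := fun n => (φ n).normed volume
  have hρ : ∀ n, Continuous (ρ n) := fun n => (φ n).continuous_normed
  have hρb : ∀ n, ∃ C, ∀ x, ‖ρ n x‖ ≤ C := fun n =>
    ((φ n).hasCompactSupport_normed (μ := volume)).exists_bound_of_continuous (hρ n)
  let v : ℕ → ℝ → EuclideanSpace ℝ (Fin d) → ℝ := fun n t x => ∫ y, u t y * ρ n (x - y)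
  have hv : ∀ n, StronglyMeasurable (Function.uncurry (v n)) := by
    intro n
    obtain ⟨C, hC⟩ := hρb n
    refine stronglyMeasurable_uncurry_of_continuous_of_stronglyMeasurable (fun x => ?_) (fun t => ?_)
    · exact hc (fun y => ρ n (x - y)) ((hρ n).comp (by fun_prop)) ⟨C, fun y => hC _⟩
    · refine Continuous.stronglyMeasurable ?_
      refine continuous_of_dominated (bound := fun y => |u t y| * C) (fun x => ?_) (fun x => ?_) ?_ ?_
      · exact (hi t).1.mul ((hρ n).comp (by fun_prop)).aestronglyMeasurable
      · refine Eventually.of_forall fun y => ?_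
        rw [norm_mul]
        exact mul_le_mul_of_nonneg_left (hC _) (abs_nonneg _)
      · exact (hi t).abs.mul_const _
      · refine Eventually.of_forall fun y => ?_
        exact continuous_const.mul ((hρ n).comp (by fun_prop))
  refine ⟨fun t x => limsup (fun n => v n t x) atTop, ?_, fun t => ?_⟩
  · exact (Measurable.limsup (fun n => (hv n).measurable)).stronglyMeasurable
  · have ht1 : Tendsto (fun n => (φ n).rOut) atTop (nhds 0) := by
      have := (tendsto_one_div_add_atTop_nhds_zero_nat (𝕜 := ℝ)).const_mul 2
      rw [mul_zero] at this
      exact this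
    have := ContDiffBump.ae_convolution_tendsto_right_of_locallyIntegrable (μ := volume) (φ := φ) (K := 2)
      ht1 (Eventually.of_forall fun n => le_rfl) (hi t).locallyIntegrable
    filter_upwards [this] with x hx
    refine Tendsto.limsup_eq ?_
    refine hx.congr fun n => ?_
    rw [convolution_eq_swap]
    simp only [ContinuousLinearMap.lsmul_apply, smul_eq_mul, v, ρ]
    congr 1; ext y; ring

/-- clamp -/
def cl (M r : ℝ) : ℝ := max (-M) (min r M)

lemma cl_lip (M : ℝ) (r s : ℝ) : |cl M r - cl M s| ≤ |r - s| := by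
  have h : LipschitzWith 1 (cl M) := (LipschitzWith.id.min_const M).const_max (-M)
  simpa [Real.dist_eq] using h.dist_le_mul r s

lemma cl_cont (M : ℝ) : Continuous (cl M) := by unfold cl; fun_prop

lemma cl_abs {M : ℝ} (hM : 0 ≤ M) (r : ℝ) : |cl M r| ≤ M := by
  unfold cl
  rw [abs_le]
  exact ⟨le_max_left _ _, max_le (by linarith) (min_le_right _ _)⟩

lemma cl_eq {M r : ℝ} (h : |r| ≤ M) : cl M r = r := by
  rw [abs_le] at h
  unfold cl
  rw [min_eq_left h.2, max_eq_right h.1]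

lemma cl_zero {M : ℝ} (hM : 0 ≤ M) : cl M 0 = 0 := cl_eq (by simpa using hM)

lemma beta_lip {β : ℝ → ℝ} (hβ : ContDiff ℝ 1 β) {M : ℝ} : ∃ L, 0 ≤ L ∧
    ∀ r s, |r| ≤ M → |s| ≤ M → |β r - β s| ≤ L * |r - s| := by
  obtain ⟨C, hC⟩ := (isCompact_Icc (a := -M) (b := M)).exists_bound_of_continuousOn
    (hβ.continuous_deriv le_rfl).continuousOn
  refine ⟨|C|, abs_nonneg _, fun r s hr hs => ?_⟩
  exact (convex_Icc (-M) M).norm_image_sub_le_of_norm_deriv_le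
    (fun x _ => hβ.differentiable (by simp) x) (fun x hx => (hC x hx).trans (le_abs_self C))
    (abs_le.1 hs) (abs_le.1 hr)

lemma b_lip {d : ℕ} {b : EuclideanSpace ℝ (Fin d) → ℝ → EuclideanSpace ℝ (Fin d)} (hb : HypB b)
    {M : ℝ} (hM : 0 < M) : ∃ L, 0 ≤ L ∧
    ∀ x r s, |r| ≤ M → |s| ≤ M → ‖r • b x r - s • b x s‖ ≤ L * |r - s| := by
  obtain ⟨h1, ⟨Cb, hCb⟩, h3, h4, -⟩ := hb
  obtain ⟨C, hC⟩ := h4 M hM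
  refine ⟨|Cb| + M * |C|, by positivity, fun x r s hr hs => ?_⟩
  have hd : Differentiable ℝ (fun s => b x s) := by
    have : ContDiff ℝ 1 (fun s : ℝ => b x s) := h1.comp (contDiff_prodMk_right x)
    exact this.differentiable (by simp)
  have k1 : ‖b x r - b x s‖ ≤ |C| * |r - s| :=
    (convex_Icc (-M) M).norm_image_sub_le_of_norm_deriv_le (f := fun s => b x s)
      (fun y _ => hd y) (fun y hy => (hC x y (abs_le.2 hy)).trans (le_abs_self C))
      (abs_le.1 hs) (abs_le.1 hr)
  have e : r • b x r - s • b x s = (r - s) • b x r + s • (b x r - b x s) := by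
    rw [sub_smul, smul_sub]; abel
  rw [e]
  refine (norm_add_le _ _).trans ?_
  rw [norm_smul, norm_smul]
  have k2 : ‖r - s‖ * ‖b x r‖ ≤ |r - s| * |Cb| :=
    mul_le_mul_of_nonneg_left ((hCb x r).trans (le_abs_self _)) (abs_nonneg _)
  have k3 : ‖s‖ * ‖b x r - b x s‖ ≤ M * (|C| * |r - s|) := by
    gcongr
    exact hs
  linarith

lemma rep {d : ℕ} {T : ℝ} (hT : 0 < T) {β : ℝ → ℝ}
    {b : EuclideanSpace ℝ (Fin d) → ℝ → EuclideanSpace ℝ (Fin d)}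
    {u0 : EuclideanSpace ℝ (Fin d) → ℝ} {u : ℝ → EuclideanSpace ℝ (Fin d) → ℝ}
    (hs : IsDistSol β b u0 u) (h1 : BddL1 T u) (h2 : BddLinfty T u) :
    ∃ (v : ℝ → EuclideanSpace ℝ (Fin d) → ℝ) (A M : ℝ),
      StronglyMeasurable (Function.uncurry v) ∧ (∀ t, Integrable (v t)) ∧
      (∀ t, ∫ x, |v t x| ≤ A) ∧
      (∀ ψ : EuclideanSpace ℝ (Fin d) → ℝ, Continuous ψ → (∃ C, ∀ x, |ψ x| ≤ C) →
        Continuous (fun t => ∫ x, v t x * ψ x)) ∧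
      (∀ t ∈ Icc 0 T, v t =ᵐ[volume] u t) ∧
      (∀ᵐ t ∂(volume.restrict (Ioo 0 T)), ∀ᵐ x, |v t x| ≤ M) := by
  obtain ⟨s1, s2, -, -⟩ := hs
  obtain ⟨C, hC⟩ := h1
  obtain ⟨M, hM⟩ := h2
  let τ : ℝ → ℝ := fun t => max 0 (min t T)
  have hτc : Continuous τ := by fun_prop
  have hτ0 : ∀ t, 0 ≤ τ t := fun t => le_max_left _ _
  have hτT : ∀ t, τ t ≤ T := fun t => max_le hT.le (min_le_right _ _)
  have hτ : ∀ t ∈ Icc 0 T, τ t = t := fun t ht => by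
    simp only [τ]; rw [min_eq_left ht.2, max_eq_right ht.1]
  have hcont : ∀ ψ : EuclideanSpace ℝ (Fin d) → ℝ, Continuous ψ → (∃ C, ∀ x, |ψ x| ≤ C) →
        Continuous (fun t => ∫ x, u (τ t) x * ψ x) := by
    intro ψ h h'
    have : ContinuousOn (fun t => ∫ x, u t x * ψ x) (Ici 0) := fun s hs => s2 ψ h h' s hs
    exact this.comp_continuous hτc hτ0
  obtain ⟨v, hv, hvu⟩ := meas_version (u := fun t => u (τ t)) (fun t => s1 _ (hτ0 t)) hcont
  have hvu' : ∀ t ∈ Icc 0 T, v t =ᵐ[volume] u t := fun t ht => by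
    have := hvu t
    simp only [hτ t ht] at this
    exact this
  refine ⟨v, |C| + (∫ x, |u 0 x|) + ∫ x, |u T x|, M, hv,
    fun t => (s1 _ (hτ0 t)).congr (hvu t).symm, fun t => ?_, fun ψ h h' => ?_, hvu', ?_⟩
  · have e : ∫ x, |v t x| = ∫ x, |u (τ t) x| := integral_congr_ae (by
      filter_upwards [hvu t] with x hx; rw [hx])
    rw [e]
    have n0 : 0 ≤ ∫ x, |u 0 x| := integral_nonneg fun _ => abs_nonneg _
    have nT : 0 ≤ ∫ x, |u T x| := integral_nonneg fun _ => abs_nonneg _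
    have nC := abs_nonneg C
    rcases (hτ0 t).eq_or_lt with h | h
    · rw [← h]; linarith
    rcases (hτT t).eq_or_lt with h' | h'
    · rw [h']; linarith
    · have := hC _ ⟨h, h'⟩
      linarith [le_abs_self C]
  · refine (hcont ψ h h').congr fun t => ?_
    exact integral_congr_ae (by filter_upwards [hvu t] with x hx; rw [hx])
  · filter_upwards [Measure.ae_ae_of_ae_prod hM, ae_restrict_mem measurableSet_Ioo] with t ht htm
    filter_upwards [ht, hvu' t ⟨htm.1.le, htm.2.le⟩] with x hx hx'
    rw [hx']; exact hx



section phi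
variable {d : ℕ} {φ : ℝ → EuclideanSpace ℝ (Fin d) → ℝ}

lemma phi_fderiv (h : ContDiff ℝ ∞ (Function.uncurry φ)) (t : ℝ) (x : EuclideanSpace ℝ (Fin d)) :
    fderiv ℝ (φ t) x = (fderiv ℝ (Function.uncurry φ) (t, x)).comp
      (ContinuousLinearMap.inr ℝ ℝ (EuclideanSpace ℝ (Fin d))) := by
  have h1 := (h.differentiable (by simp) (t, x)).hasFDerivAt
  exact (h1.comp x (hasFDerivAt_prodMk_right t x)).fderiv

lemma phi_deriv (h : ContDiff ℝ ∞ (Function.uncurry φ)) (t : ℝ) (x : EuclideanSpace ℝ (Fin d)) :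
    deriv (fun s => φ s x) t = fderiv ℝ (Function.uncurry φ) (t, x) (1, 0) := by
  have h1 := (h.differentiable (by simp) (t, x)).hasFDerivAt
  have h2 := (h1.comp t (hasFDerivAt_prodMk_left t x)).hasDerivAt.deriv
  refine Eq.trans h2 ?_
  simp

lemma phi_lap (h : ContDiff ℝ ∞ (Function.uncurry φ)) (t : ℝ) (x : EuclideanSpace ℝ (Fin d)) :
    lap (φ t) x = ∑ i, fderiv ℝ (fun p => fderiv ℝ (Function.uncurry φ) p (0, EuclideanSpace.single i 1))
      (t, x) (0, EuclideanSpace.single i 1) := by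
  unfold lap
  refine Finset.sum_congr rfl fun i _ => ?_
  have h2 : ContDiff ℝ ∞ (Function.uncurry (fun t x => fderiv ℝ (Function.uncurry φ) (t, x) 
      ((0 : ℝ), EuclideanSpace.single i (1:ℝ)))) :=
    (h.fderiv_right (m := ∞) (by simp)).clm_apply contDiff_const
  have := phi_fderiv h2 t x
  simp only [phi_fderiv h]
  refine Eq.trans ?_ (congrArg (fun l => l (EuclideanSpace.single i 1)) this)
  simp

/-- joint regularity of the coefficients coming from a test function -/
lemma phi_props (h : ContDiff ℝ ∞ (Function.uncurry φ)) (hc : HasCompactSupport (Function.uncurry φ)) :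
    (Continuous fun p : ℝ × EuclideanSpace ℝ (Fin d) => deriv (fun s => φ s p.2) p.1) ∧
    (Continuous fun p : ℝ × EuclideanSpace ℝ (Fin d) => fderiv ℝ (φ p.1) p.2) ∧
    (Continuous fun p : ℝ × EuclideanSpace ℝ (Fin d) => lap (φ p.1) p.2) ∧
    (∃ C, ∀ t x, |deriv (fun s => φ s x) t| ≤ C ∧ ‖fderiv ℝ (φ t) x‖ ≤ C ∧ |lap (φ t) x| ≤ C) ∧
    (∀ t x, (t, x) ∉ tsupport (Function.uncurry φ) →
      deriv (fun s => φ s x) t = 0 ∧ fderiv ℝ (φ t) x = 0 ∧ lap (φ t) x = 0) := by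
  have hf : ContDiff ℝ ∞ (fderiv ℝ (Function.uncurry φ)) := h.fderiv_right (m := ∞) (by simp)
  have c1 : Continuous fun p : ℝ × EuclideanSpace ℝ (Fin d) => deriv (fun s => φ s p.2) p.1 := by
    simp only [phi_deriv h]
    exact hf.continuous.clm_apply continuous_const
  have c2 : Continuous fun p : ℝ × EuclideanSpace ℝ (Fin d) => fderiv ℝ (φ p.1) p.2 := by
    simp only [phi_fderiv h]
    exact hf.continuous.clm_comp continuous_const
  have c3 : Continuous fun p : ℝ × EuclideanSpace ℝ (Fin d) => lap (φ p.1) p.2 := by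
    simp only [phi_lap h]
    refine continuous_finsetSum _ fun i _ => ?_
    have : ContDiff ℝ ∞ (fun p => fderiv ℝ (Function.uncurry φ) p (0, EuclideanSpace.single i (1:ℝ))) :=
      hf.clm_apply contDiff_const
    exact (this.continuous_fderiv (by simp)).clm_apply continuous_const
  have z : ∀ t x, (t, x) ∉ tsupport (Function.uncurry φ) →
      deriv (fun s => φ s x) t = 0 ∧ fderiv ℝ (φ t) x = 0 ∧ lap (φ t) x = 0 := by
    intro t x hx
    have e : ∀ᶠ p in nhds (t, x), Function.uncurry φ p = 0 := 
      notMem_tsupport_iff_eventuallyEq.1 hx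
    have e1 : (fun p => Function.uncurry φ p) =ᶠ[nhds (t, x)] fun _ => 0 := e
    have e2 : fderiv ℝ (Function.uncurry φ) (t, x) = 0 := by
      rw [Filter.EventuallyEq.fderiv_eq e1]; simp
    refine ⟨by rw [phi_deriv h, e2]; simp, by rw [phi_fderiv h, e2]; simp, ?_⟩
    have e3 : φ t =ᶠ[nhds x] fun _ => 0 := 
      (Continuous.prodMk_right t).continuousAt.eventually e
    rw [lap_congr e3]
    simp [lap]
  have bd : ∀ {F : Type} [NormedAddCommGroup F] (q : ℝ × EuclideanSpace ℝ (Fin d) → F), Continuous q →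
      (∀ p, p ∉ tsupport (Function.uncurry φ) → q p = 0) → ∃ C, ∀ p, ‖q p‖ ≤ C := fun q hq h0 =>
    (HasCompactSupport.intro hc h0).exists_bound_of_continuous hq
  obtain ⟨C1, h1⟩ := bd _ c1 fun p hp => (z p.1 p.2 hp).1
  obtain ⟨C2, h2⟩ := bd _ c2 fun p hp => (z p.1 p.2 hp).2.1
  obtain ⟨C3, h3⟩ := bd _ c3 fun p hp => (z p.1 p.2 hp).2.2
  refine ⟨c1, c2, c3, ⟨max C1 (max C2 C3), fun t x => ⟨?_, ?_, ?_⟩⟩, z⟩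
  · exact (h1 (t, x)).trans (le_max_left _ _)
  · exact (h2 (t, x)).trans ((le_max_left _ _).trans (le_max_right _ _))
  · exact (h3 (t, x)).trans ((le_max_right _ _).trans (le_max_right _ _))
end phi

structure Tri {d : ℕ} (A L : ℝ) (v k : ℝ → EuclideanSpace ℝ (Fin d) → ℝ)
    (h : ℝ → EuclideanSpace ℝ (Fin d) → EuclideanSpace ℝ (Fin d)) : Prop where
  hL : 0 ≤ L
  mv : StronglyMeasurable (Function.uncurry v)
  mkk : StronglyMeasurable (Function.uncurry k)
  mh : StronglyMeasurable (Function.uncurry h)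
  iv : ∀ t, Integrable (v t)
  hA : ∀ t, ∫ x, |v t x| ≤ A
  hk : ∀ t x, |k t x| ≤ L * |v t x|
  hh : ∀ t x, ‖h t x‖ ≤ L * |v t x|

lemma Tri.int {d : ℕ} {A L : ℝ} {v k : ℝ → EuclideanSpace ℝ (Fin d) → ℝ}
    {h : ℝ → EuclideanSpace ℝ (Fin d) → EuclideanSpace ℝ (Fin d)} (S : Tri A L v k h) (T : ℝ)
    {φ : ℝ → EuclideanSpace ℝ (Fin d) → ℝ} (hφ : ContDiff ℝ ∞ (Function.uncurry φ))
    (hc : HasCompactSupport (Function.uncurry φ)) :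
    (∀ t, Integrable (fun x => v t x * deriv (fun s => φ s x) t + k t x * lap (φ t) x
        + fderiv ℝ (φ t) x (h t x))) ∧
    Integrable (fun t => ∫ x, (v t x * deriv (fun s => φ s x) t + k t x * lap (φ t) x
        + fderiv ℝ (φ t) x (h t x))) (volume.restrict (Ioo 0 T)) := by
  obtain ⟨c1, c2, c3, ⟨C, hC⟩, -⟩ := phi_props hφ hc
  have hC0 : 0 ≤ C := (abs_nonneg _).trans (hC 0 0).1
  have hL := S.hL
  have sm : StronglyMeasurable (fun p : ℝ × EuclideanSpace ℝ (Fin d) =>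
      v p.1 p.2 * deriv (fun s => φ s p.2) p.1 + k p.1 p.2 * lap (φ p.1) p.2
        + fderiv ℝ (φ p.1) p.2 (h p.1 p.2)) := by
    have h3 : StronglyMeasurable (fun p : ℝ × EuclideanSpace ℝ (Fin d) =>
        fderiv ℝ (φ p.1) p.2 (h p.1 p.2)) :=
      (isBoundedBilinearMap_apply (𝕜 := ℝ) (E := EuclideanSpace ℝ (Fin d)) (F := ℝ)).continuous.comp_stronglyMeasurable
        (c2.stronglyMeasurable.prodMk S.mh)
    exact ((S.mv.mul c1.stronglyMeasurable).add (S.mkk.mul c3.stronglyMeasurable)).add h3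
  have bd : ∀ t x, ‖v t x * deriv (fun s => φ s x) t + k t x * lap (φ t) x
        + fderiv ℝ (φ t) x (h t x)‖ ≤ (C + 2 * C * L) * |v t x| := by
    intro t x
    obtain ⟨a1, a2, a3⟩ := hC t x
    have b1 : ‖v t x * deriv (fun s => φ s x) t‖ ≤ |v t x| * C := by
      rw [norm_mul]; exact mul_le_mul_of_nonneg_left a1 (abs_nonneg _)
    have b2 : ‖k t x * lap (φ t) x‖ ≤ (L * |v t x|) * C := by
      rw [norm_mul]; gcongr
      · exact S.hk t x
      · exact a3
    have b3 : ‖fderiv ℝ (φ t) x (h t x)‖ ≤ C * (L * |v t x|) := by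
      refine (ContinuousLinearMap.le_of_opNorm_le _ a2 _).trans ?_
      gcongr
      exact S.hh t x
    refine (norm_add₃_le).trans ?_
    linarith
  constructor
  · intro t
    refine ((S.iv t).abs.const_mul (C + 2 * C * L)).mono' ?_ (Eventually.of_forall (bd t))
    exact (sm.comp_measurable measurable_prodMk_left).aestronglyMeasurable
  · have : IsFiniteMeasure (volume.restrict (Ioo 0 T)) := ⟨by simp⟩
    refine Integrable.of_bound (C := (C + 2 * C * L) * A) ?_ ?_
    · exact sm.integral_prod_right'.aestronglyMeasurable
    · refine Eventually.of_forall fun t => ?_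
      refine (norm_integral_le_of_norm_le ((S.iv t).abs.const_mul (C + 2 * C * L))
        (Eventually.of_forall (bd t))).trans ?_
      rw [integral_const_mul]
      gcongr
      exact S.hA t

lemma weak_rep {d : ℕ} {T M : ℝ} {β : ℝ → ℝ}
    {b : EuclideanSpace ℝ (Fin d) → ℝ → EuclideanSpace ℝ (Fin d)}
    {u0 : EuclideanSpace ℝ (Fin d) → ℝ} {u v : ℝ → EuclideanSpace ℝ (Fin d) → ℝ}
    (hs : IsDistSol β b u0 u) (hvu : ∀ t ∈ Icc 0 T, v t =ᵐ[volume] u t)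
    (hM : ∀ᵐ t ∂(volume.restrict (Ioo 0 T)), ∀ᵐ x, |v t x| ≤ M)
    {φ : ℝ → EuclideanSpace ℝ (Fin d) → ℝ} (hφ : ContDiff ℝ ∞ (Function.uncurry φ))
    (hc : HasCompactSupport (Function.uncurry φ))
    (hsupp : ∀ p ∈ tsupport (Function.uncurry φ), p.1 ∈ Ioo 0 T) :
    ∫ t in Ioo 0 T, ∫ x, (v t x * deriv (fun s => φ s x) t + β (cl M (v t x)) * lap (φ t) x
        + fderiv ℝ (φ t) x (cl M (v t x) • b x (cl M (v t x)))) = 0 := by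
  obtain ⟨-, -, -, -, hz⟩ := phi_props hφ hc
  have h := hs.2.2.1 φ hφ hc fun p hp => (hsupp p hp).1
  refine Eq.trans ?_ h
  rw [setIntegral_eq_of_subset_of_forall_sdiff_eq_zero measurableSet_Ioi
    (fun t (ht : t ∈ Ioo 0 T) => (ht.1 : t ∈ Ioi 0)) ?_]
  · apply integral_congr_ae
    filter_upwards [hM, ae_restrict_mem measurableSet_Ioo] with t ht htm
    apply integral_congr_ae
    filter_upwards [ht, hvu t ⟨htm.1.le, htm.2.le⟩] with x hx hx'
    rw [cl_eq hx, hx']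
    simp
  · intro t ht
    have ht' : t ∉ Ioo 0 T := ht.2
    apply integral_eq_zero_of_ae
    refine Eventually.of_forall fun x => ?_
    obtain ⟨e1, e2, e3⟩ := hz t x fun hmem => ht' (hsupp _ hmem)
    simp [e1, e2, e3]

theorem main_aux
    {d : ℕ} (T : ℝ) (hT : 0 < T)
    (β : ℝ → ℝ) (γ0 : ℝ) (hβ : HypBeta β γ0)
    (b : EuclideanSpace ℝ (Fin d) → ℝ → EuclideanSpace ℝ (Fin d)) (hb : HypB b)
    (u0 : EuclideanSpace ℝ (Fin d) → ℝ)
    (u₁ u₂ : ℝ → EuclideanSpace ℝ (Fin d) → ℝ)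
    (hsol₁ : IsDistSol β b u0 u₁) (hsol₂ : IsDistSol β b u0 u₂)
    (hL1₁ : BddL1 T u₁) (hL1₂ : BddL1 T u₂)
    (hLinf₁ : BddLinfty T u₁) (hLinf₂ : BddLinfty T u₂) :
    ∀ t ∈ Icc (0 : ℝ) T, u₁ t =ᵐ[volume] u₂ t := by
  obtain ⟨v₁, A₁, M₁, m1, i1, a1, c1, e1, b1⟩ := rep hT hsol₁ hL1₁ hLinf₁
  obtain ⟨v₂, A₂, M₂, m2, i2, a2, c2, e2, b2⟩ := rep hT hsol₂ hL1₂ hLinf₂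
  obtain ⟨hβ0, hβ1, hγ, hmono⟩ := hβ
  let M : ℝ := |M₁| + |M₂| + 1
  have hM : 0 < M := by positivity
  have b1' : ∀ᵐ t ∂(volume.restrict (Ioo 0 T)), ∀ᵐ x, |v₁ t x| ≤ M := by
    filter_upwards [b1] with t ht
    filter_upwards [ht] with x hx
    simp only [M]
    linarith [le_abs_self M₁, abs_nonneg M₂]
  have b2' : ∀ᵐ t ∂(volume.restrict (Ioo 0 T)), ∀ᵐ x, |v₂ t x| ≤ M := by
    filter_upwards [b2] with t ht
    filter_upwards [ht] with x hx
    simp only [M]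
    linarith [le_abs_self M₂, abs_nonneg M₁]
  obtain ⟨L1, hL1, lip1⟩ := beta_lip hβ1 (M := M)
  obtain ⟨L2, hL2, lip2⟩ := b_lip hb hM
  let L := L1 + L2
  have hL : 0 ≤ L := add_nonneg hL1 hL2
  have lipβ : ∀ r s, |β (cl M r) - β (cl M s)| ≤ L * |r - s| := fun r s =>
    (lip1 _ _ (cl_abs hM.le r) (cl_abs hM.le s)).trans
      (mul_le_mul (by simp only [L]; linarith) (cl_lip M r s) (abs_nonneg _) hL)
  have lipb : ∀ x r s, ‖cl M r • b x (cl M r) - cl M s • b x (cl M s)‖ ≤ L * |r - s| := fun x r s =>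
    (lip2 x _ _ (cl_abs hM.le r) (cl_abs hM.le s)).trans
      (mul_le_mul (by simp only [L]; linarith) (cl_lip M r s) (abs_nonneg _) hL)
  have mk' : ∀ v : ℝ → EuclideanSpace ℝ (Fin d) → ℝ, StronglyMeasurable (Function.uncurry v) →
      StronglyMeasurable (Function.uncurry fun t x => β (cl M (v t x))) := fun v hv =>
    (hβ1.continuous.comp (cl_cont M)).comp_stronglyMeasurable hv
  have mh' : ∀ v : ℝ → EuclideanSpace ℝ (Fin d) → ℝ, StronglyMeasurable (Function.uncurry v) →
      StronglyMeasurable (Function.uncurry fun t x => cl M (v t x) • b x (cl M (v t x))) := by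
    intro v hv
    have k1 : StronglyMeasurable (Function.uncurry fun t x => cl M (v t x)) :=
      (cl_cont M).comp_stronglyMeasurable hv
    have k2 : StronglyMeasurable (fun p : ℝ × EuclideanSpace ℝ (Fin d) => p.2) :=
      continuous_snd.stronglyMeasurable
    have k3 := hb.1.continuous.comp_stronglyMeasurable (k2.prodMk k1)
    exact k1.smul k3
  have tri : ∀ (v : ℝ → EuclideanSpace ℝ (Fin d) → ℝ) (A : ℝ), StronglyMeasurable (Function.uncurry v) →
      (∀ t, Integrable (v t)) → (∀ t, ∫ x, |v t x| ≤ A) →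
      Tri A L v (fun t x => β (cl M (v t x))) (fun t x => cl M (v t x) • b x (cl M (v t x))) := by
    intro v A hv hi hA
    refine ⟨hL, hv, mk' v hv, mh' v hv, hi, hA, fun t x => ?_, fun t x => ?_⟩
    · simpa [cl_zero hM.le, hβ0] using lipβ (v t x) 0
    · simpa [cl_zero hM.le] using lipb x (v t x) 0
  have T1 := tri v₁ A₁ m1 i1 a1
  have T2 := tri v₂ A₂ m2 i2 a2
  have S : Setup T (A₁ + A₂) (2 * M) L γ0 (fun t x => v₁ t x - v₂ t x)
      (fun t x => β (cl M (v₁ t x)) - β (cl M (v₂ t x)))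
      (fun t x => cl M (v₁ t x) • b x (cl M (v₁ t x)) - cl M (v₂ t x) • b x (cl M (v₂ t x))) := by
    refine ⟨hT, hL, m1.sub m2, T1.mkk.sub T2.mkk, T1.mh.sub T2.mh, fun t => (i1 t).sub (i2 t), fun t => ?_,
      fun t x => lipβ _ _, fun t x => lipb x _ _, ?_, fun ψ hψ hψb => ?_, ?_, fun φ hφ hc hsupp => ?_⟩
    · refine (integral_mono ((i1 t).sub (i2 t)).abs ((i1 t).abs.add (i2 t).abs)
        fun x => abs_sub _ _).trans ?_
      refine (integral_add (i1 t).abs (i2 t).abs).le.trans ?_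
      exact add_le_add (a1 t) (a2 t)
    · filter_upwards [b1', b2'] with t h1 h2
      filter_upwards [h1, h2] with x h1 h2
      refine ⟨(abs_sub _ _).trans (by linarith), ?_⟩
      rw [cl_eq h1, cl_eq h2]
      have := hmono (v₁ t x) (v₂ t x)
      linarith
    · refine ((c1 ψ hψ hψb).sub (c2 ψ hψ hψb)).congr fun t => ?_
      obtain ⟨C, hC⟩ := hψb
      refine (integral_sub (f := fun x => v₁ t x * ψ x) (g := fun x => v₂ t x * ψ x) ?_ ?_).symm.trans ?_
      · exact (i1 t).mul_bdd (c := C) hψ.aestronglyMeasurable (Eventually.of_forall hC)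
      · exact (i2 t).mul_bdd (c := C) hψ.aestronglyMeasurable (Eventually.of_forall hC)
      · congr 1; ext x; ring
    · filter_upwards [e1 0 ⟨le_rfl, hT.le⟩, e2 0 ⟨le_rfl, hT.le⟩, hsol₁.2.2.2, hsol₂.2.2.2] with x h1 h2 h3 h4
      simp [h1, h2, h3, h4]
    · have w1 := weak_rep hsol₁ e1 b1' hφ hc hsupp
      have w2 := weak_rep hsol₂ e2 b2' hφ hc hsupp
      obtain ⟨p1, q1⟩ := T1.int T hφ hc
      obtain ⟨p2, q2⟩ := T2.int T hφ hc
      have e := integral_sub q1 q2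
      rw [w1, w2, sub_zero] at e
      refine Eq.trans ?_ e
      congr 1; ext t
      rw [← integral_sub (p1 t) (p2 t)]
      congr 1; ext x
      rw [map_sub]
      ring
  intro t ht
  filter_upwards [S.final hγ t ht, e1 t ht, e2 t ht] with x hx h1 h2
  rw [← h1, ← h2]
  exact sub_eq_zero.1 hx


/-- Theorem 2.1: uniqueness of bounded distributional solutions of the
nonlinear Fokker–Planck equation `∂_t u − Δβ(u) + div(b(x,u)u) = 0`, `u(0) = u0`. -/
theorem fokker_planck_uniqueness
    {d : ℕ} (hd : 1 ≤ d) (T : ℝ) (hT : 0 < T)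
    (β : ℝ → ℝ) (γ0 : ℝ) (hβ : HypBeta β γ0)
    (b : EuclideanSpace ℝ (Fin d) → ℝ → EuclideanSpace ℝ (Fin d)) (hb : HypB b)
    (u0 : EuclideanSpace ℝ (Fin d) → ℝ)
    (hu0L1 : Integrable u0) (hu0Linf : ∃ C, ∀ᵐ x, |u0 x| ≤ C)
    (u₁ u₂ : ℝ → EuclideanSpace ℝ (Fin d) → ℝ)
    (hsol₁ : IsDistSol β b u0 u₁) (hsol₂ : IsDistSol β b u0 u₂)
    (hL1₁ : BddL1 T u₁) (hL1₂ : BddL1 T u₂)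
    (hLinf₁ : BddLinfty T u₁) (hLinf₂ : BddLinfty T u₂) :
    ∀ t ∈ Icc (0 : ℝ) T, u₁ t =ᵐ[volume] u₂ t := by
  exact main_aux T hT β γ0 hβ b hb u0 u₁ u₂ hsol₁ hsol₂ hL1₁ hL1₂ hLinf₁ hLinf₂

end
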